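/- arXiv:1706.04079 — 3 statements merged into one kernel-verified Lean document; each statement's English description precedes it below -/
import Mathlib

section
/- Let μ be a finite positive Borel measure on [0,1). The following conditions are equivalent: (i) ∫_{[0,1)} dμ(t)/(1-t) < ∞; (ii) ∑_{n=0}^∞ μ_n < ∞; (iii) the operator I_μ is well defined on H^∞ and bounded from H^∞ into itself; (iv) the operator H_μ is well defined on H^∞ and bounded from H^∞ into itself. -/
open MeasureTheory Set Metric ENNReal

noncomputable section

namespace PaperHankel

/-- The moment of order `n` of a measure on `[0,1)`:  `μ_n = ∫_{[0,1)} t^n dμ(t)`. -/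
def mom (μ : Measure ℝ) (n : ℕ) : ℝ := ∫ t in Ico (0:ℝ) 1, t ^ n ∂μ

/-- The `n`-th Taylor coefficient of `f` at `0`. -/
def tc (f : ℂ → ℂ) (n : ℕ) : ℂ := iteratedDeriv n f 0 / n.factorial

/-- The `n`-th Taylor coefficient of `H_μ f`, namely `∑_k μ_{n+k} a_k`. -/
def hmuCoeff (μ : Measure ℝ) (f : ℂ → ℂ) (n : ℕ) : ℂ :=
  ∑' k : ℕ, (mom μ (n + k) : ℂ) * tc f k

/-- `H_μ f` is well defined: each coefficient series converges absolutely, and the resulting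
power series has radius of convergence at least `1`. -/
def HmuWD (μ : Measure ℝ) (f : ℂ → ℂ) : Prop :=
  (∀ n : ℕ, Summable fun k : ℕ => ‖(mom μ (n + k) : ℂ) * tc f k‖) ∧
  ∀ z ∈ ball (0:ℂ) 1, Summable fun n : ℕ => ‖hmuCoeff μ f n * z ^ n‖

/-- The generalized Hilbert operator induced by the Hankel matrix of moments of `μ`. -/
def Hmu (μ : Measure ℝ) (f : ℂ → ℂ) : ℂ → ℂ :=
  fun z => ∑' n : ℕ, hmuCoeff μ f n * z ^ n

/-- `I_μ f` is well defined: the defining integral converges absolutely for every `z ∈ 𝔻`. -/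
def ImuWD (μ : Measure ℝ) (f : ℂ → ℂ) : Prop :=
  ∀ z ∈ ball (0:ℂ) 1, IntegrableOn (fun t : ℝ => f t / (1 - t * z)) (Ico (0:ℝ) 1) μ

/-- The integral operator `I_μ f (z) = ∫_{[0,1)} f(t)/(1-tz) dμ(t)`. -/
def Imu (μ : Measure ℝ) (f : ℂ → ℂ) : ℂ → ℂ :=
  fun z => ∫ t in Ico (0:ℝ) 1, f t / (1 - t * z) ∂μ

/-- The `p`-th circle mean `M_p(r,f)` raised into the Hardy norm shape:
`((1/2π) ∫_0^{2π} |f(r e^{iθ})|^p dθ)^{1/p}`. -/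
def circMean (p : ℝ) (f : ℂ → ℂ) (r : ℝ) : ℝ :=
  ((2 * Real.pi)⁻¹ * ∫ θ in (0:ℝ)..(2 * Real.pi),
      ‖f (r * Complex.exp (θ * Complex.I))‖ ^ p) ^ (1 / p)

/-- Membership in the Hardy space `H^p`. -/
def MemHardy (p : ℝ) (f : ℂ → ℂ) : Prop :=
  DifferentiableOn ℂ f (ball (0:ℂ) 1) ∧ ∃ M : ℝ, ∀ r ∈ Ico (0:ℝ) 1, circMean p f r ≤ M

/-- The `H^p` norm. -/
def hardyNorm (p : ℝ) (f : ℂ → ℂ) : ℝ :=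
  sSup {x : ℝ | ∃ r ∈ Ico (0:ℝ) 1, x = circMean p f r}

/-- Membership in `H^∞`: analytic and bounded on the unit disc. -/
def MemHinf (f : ℂ → ℂ) : Prop :=
  DifferentiableOn ℂ f (ball (0:ℂ) 1) ∧ ∃ M : ℝ, ∀ z ∈ ball (0:ℂ) 1, ‖f z‖ ≤ M

/-- The `H^∞` norm. -/
def hinfNorm (f : ℂ → ℂ) : ℝ := sSup {x : ℝ | ∃ z ∈ ball (0:ℂ) 1, x = ‖f z‖}

/-- The mean `M_2(r,g) = ((1/2π) ∫_0^{2π} |g(r e^{iθ})|² dθ)^{1/2}`. -/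
def M2 (g : ℂ → ℂ) (r : ℝ) : ℝ :=
  Real.sqrt ((2 * Real.pi)⁻¹ * ∫ θ in (0:ℝ)..(2 * Real.pi),
      ‖g (r * Complex.exp (θ * Complex.I))‖ ^ 2)

/-- Membership in the mean Lipschitz space `Λ²_{1/2}`:
`M_2(r,f') = O((1-r)^{-1/2})` as `r → 1⁻`. -/
def MemLambda (f : ℂ → ℂ) : Prop :=
  DifferentiableOn ℂ f (ball (0:ℂ) 1) ∧
  ∃ C : ℝ, ∀ r ∈ Ico (0:ℝ) 1, Real.sqrt (1 - r) * M2 (deriv f) r ≤ C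

/-- The norm on `Λ²_{1/2}`. -/
def lambdaNorm (f : ℂ → ℂ) : ℝ :=
  ‖f 0‖ + sSup {x : ℝ | ∃ r ∈ Ico (0:ℝ) 1, x = Real.sqrt (1 - r) * M2 (deriv f) r}

/-- `∫_𝔻 |f'(z)|² g(z,a)^s dA(z)` with `g(z,a) = log |(1- ā z)/(z-a)|` and `dA` the
normalized area measure, computed as a lower integral in `[0,∞]`. -/
def qsInt (s : ℝ) (f : ℂ → ℂ) (a : ℂ) : ℝ≥0∞ :=
  (ENNReal.ofReal Real.pi)⁻¹ * ∫⁻ z in ball (0:ℂ) 1,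
    ENNReal.ofReal (‖deriv f z‖ ^ 2 * (Real.log ‖(1 - (starRingEnd ℂ) a * z) / (z - a)‖) ^ s)

/-- Membership in `Q_s`: analytic on `𝔻` with `ρ_{Q_s}(f)² = sup_{a ∈ 𝔻} ∫ ... < ∞`. -/
def MemQs (s : ℝ) (f : ℂ → ℂ) : Prop :=
  DifferentiableOn ℂ f (ball (0:ℂ) 1) ∧ (⨆ a ∈ ball (0:ℂ) 1, qsInt s f a) < ⊤

/-- The norm on `Q_s`, `‖f‖ = |f(0)| + ρ_{Q_s}(f)`. -/
def qsNorm (s : ℝ) (f : ℂ → ℂ) : ℝ :=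
  ‖f 0‖ + Real.sqrt (⨆ a ∈ ball (0:ℂ) 1, qsInt s f a).toReal

/-- The condition `∫_{[0,1)} tⁿ log(1/(1-t)) dμ(t) = O(1/n)`, stated with the lower
integral so that in particular the integrals are finite. -/
def LogMomentBigO (μ : Measure ℝ) : Prop :=
  ∃ C > 0, ∀ n : ℕ, 1 ≤ n →
    (∫⁻ t in Ico (0:ℝ) 1, ENNReal.ofReal (t ^ n * Real.log (1 / (1 - t))) ∂μ) ≤
      ENNReal.ofReal (C / n)

/-- Membership in the Bloch space. -/
def MemBloch (f : ℂ → ℂ) : Prop :=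
  DifferentiableOn ℂ f (ball (0:ℂ) 1) ∧
  ∃ M : ℝ, ∀ z ∈ ball (0:ℂ) 1, (1 - ‖z‖ ^ 2) * ‖deriv f z‖ ≤ M

/-- The Bloch norm `‖f‖ = |f(0)| + ρ_B(f)`. -/
def blochNorm (f : ℂ → ℂ) : ℝ :=
  ‖f 0‖ + sSup {x : ℝ | ∃ z ∈ ball (0:ℂ) 1, x = (1 - ‖z‖ ^ 2) * ‖deriv f z‖}

/-- Membership in the Besov space `B^p`. -/
def MemBesov (p : ℝ) (f : ℂ → ℂ) : Prop :=
  DifferentiableOn ℂ f (ball (0:ℂ) 1) ∧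
  IntegrableOn (fun z : ℂ => (1 - ‖z‖ ^ 2) ^ (p - 2) * ‖deriv f z‖ ^ p) (ball (0:ℂ) 1) volume

/-- The Besov norm `‖f‖ = |f(0)| + ρ_p(f)`. -/
def besovNorm (p : ℝ) (f : ℂ → ℂ) : ℝ :=
  ‖f 0‖ + (Real.pi⁻¹ *
    ∫ z in ball (0:ℂ) 1, (1 - ‖z‖ ^ 2) ^ (p - 2) * ‖deriv f z‖ ^ p) ^ (1 / p)

/-- `μ` is an `α`-logarithmic `s`-Carleson measure on `[0,1)`. -/
def IsLogCarleson (μ : Measure ℝ) (α s : ℝ) : Prop :=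
  ∃ C > 0, ∀ t ∈ Ico (0:ℝ) 1,
    (μ (Ico t 1)).toReal * Real.log (2 / (1 - t)) ^ α ≤ C * (1 - t) ^ s

/-- `μ` is an `s`-Carleson measure on `[0,1)`. -/
def IsCarleson (μ : Measure ℝ) (s : ℝ) : Prop :=
  ∃ C > 0, ∀ t ∈ Ico (0:ℝ) 1, (μ (Ico t 1)).toReal ≤ C * (1 - t) ^ s



lemma hasSum_fn {g g' : ℕ → ℂ} {a : ℂ} (h : HasSum g a) (e : ∀ k, g' k = g k) : HasSum g' a := by
  rwa [funext e]

lemma memc {t : ℝ} (ht : t ∈ Ico (0:ℝ) 1) : (t:ℂ) ∈ ball (0:ℂ) 1 := by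
  simp [abs_of_nonneg ht.1, ht.2]

lemma intPow (μ : Measure ℝ) [IsFiniteMeasure μ] (n : ℕ) :
    Integrable (fun t : ℝ => t ^ n) (μ.restrict (Ico (0:ℝ) 1)) := by
  refine Integrable.mono' (integrable_const (1:ℝ)) (by fun_prop) ?_
  filter_upwards [ae_restrict_mem measurableSet_Ico] with t ht
  rw [Real.norm_of_nonneg (pow_nonneg ht.1 _)]
  exact pow_le_one₀ ht.1 ht.2.le

lemma mom_nonneg (μ : Measure ℝ) (n : ℕ) : 0 ≤ mom μ n :=
  setIntegral_nonneg measurableSet_Ico fun t ht => pow_nonneg ht.1 _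

lemma one_two (μ : Measure ℝ) [IsFiniteMeasure μ]
    (h : IntegrableOn (fun t : ℝ => (1 - t)⁻¹) (Ico (0:ℝ) 1) μ) : Summable (mom μ) := by
  refine summable_of_sum_range_le (c := ∫ t in Ico (0:ℝ) 1, (1 - t)⁻¹ ∂μ) (mom_nonneg μ) ?_
  intro N
  simp only [mom]
  rw [← integral_finsetSum _ (fun i _ => intPow μ i)]
  refine setIntegral_mono_on (integrable_finsetSum _ (fun i _ => intPow μ i)) h
    measurableSet_Ico ?_
  intro t ht
  rw [← tsum_geometric_of_lt_one ht.1 ht.2]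
  exact (summable_geometric_of_lt_one ht.1 ht.2).sum_le_tsum _ (fun i _ => pow_nonneg ht.1 _)

lemma two_one (μ : Measure ℝ) [IsFiniteMeasure μ] (h : Summable (mom μ)) :
    IntegrableOn (fun t : ℝ => (1 - t)⁻¹) (Ico (0:ℝ) 1) μ := by
  refine ⟨by fun_prop, ?_⟩
  rw [hasFiniteIntegral_iff_ofReal]
  · have e : ∫⁻ t in Ico (0:ℝ) 1, ENNReal.ofReal ((1 - t)⁻¹) ∂μ
        = ∫⁻ t in Ico (0:ℝ) 1, ∑' n : ℕ, ENNReal.ofReal (t ^ n) ∂μ := by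
      refine setLIntegral_congr_fun measurableSet_Ico ?_
      intro t ht
      simp only
      rw [← tsum_geometric_of_lt_one ht.1 ht.2]
      exact ENNReal.ofReal_tsum_of_nonneg (fun n => pow_nonneg ht.1 _)
        (summable_geometric_of_lt_one ht.1 ht.2)
    rw [e, lintegral_tsum (fun n => by fun_prop)]
    have e2 : ∀ n : ℕ, ∫⁻ t in Ico (0:ℝ) 1, ENNReal.ofReal (t ^ n) ∂μ
        = ENNReal.ofReal (mom μ n) := by
      intro n
      rw [mom, ofReal_integral_eq_lintegral_ofReal (intPow μ n)]
      filter_upwards [ae_restrict_mem measurableSet_Ico] with t ht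
      exact pow_nonneg ht.1 _
    simp_rw [e2]
    rw [← ENNReal.ofReal_tsum_of_nonneg (mom_nonneg μ) h]
    exact ENNReal.ofReal_lt_top
  · filter_upwards [ae_restrict_mem measurableSet_Ico] with t ht
    exact inv_nonneg.2 (by linarith [ht.2])

lemma tc_bound {f : ℂ → ℂ} {M : ℝ} (hd : DifferentiableOn ℂ f (ball (0:ℂ) 1))
    (hM : ∀ z ∈ ball (0:ℂ) 1, ‖f z‖ ≤ M) (k : ℕ) : ‖tc f k‖ ≤ M := by
  have key : ∀ R ∈ Ioo (0:ℝ) 1, ‖tc f k‖ * R ^ k ≤ M := by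
    intro R hR
    have hsub : closedBall (0:ℂ) R ⊆ ball 0 1 := closedBall_subset_ball hR.2
    have := Complex.norm_iteratedDeriv_le_of_forall_mem_sphere_norm_le (f := f) (c := 0)
      (C := M) k hR.1 ((hd.mono hsub).diffContOnCl_ball subset_rfl)
      (fun z hz => hM z (hsub (sphere_subset_closedBall hz)))
    rw [le_div_iff₀ (pow_pos hR.1 _)] at this
    have hf : (0:ℝ) < k.factorial := by exact_mod_cast k.factorial_pos
    rw [tc, norm_div, Complex.norm_natCast, div_mul_eq_mul_div, div_le_iff₀ hf]
    linarith
  have ht : Filter.Tendsto (fun R : ℝ => ‖tc f k‖ * R ^ k) (nhdsWithin 1 (Iio 1))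
      (nhds (‖tc f k‖ * 1 ^ k)) :=
    ((continuous_const.mul (continuous_id.pow k)).tendsto 1).mono_left nhdsWithin_le_nhds
  have := le_of_tendsto ht (by
    filter_upwards [Ioo_mem_nhdsLT (show (0:ℝ) < 1 by norm_num)] with R hR using key R hR)
  simpa using this

lemma taylor {f : ℂ → ℂ} (hd : DifferentiableOn ℂ f (ball (0:ℂ) 1)) {z : ℂ}
    (hz : z ∈ ball (0:ℂ) 1) : HasSum (fun k => tc f k * z ^ k) (f z) := by
  have := Complex.hasSum_taylorSeries_on_ball (f := f) (c := 0) (r := 1)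
    (by simpa using hd) (by simpa using hz)
  refine hasSum_fn this fun k => ?_
  simp only [tc, smul_eq_mul, sub_zero]
  ring

lemma contf {f : ℂ → ℂ} (hd : DifferentiableOn ℂ f (ball (0:ℂ) 1)) :
    ContinuousOn (fun t : ℝ => f t) (Ico (0:ℝ) 1) :=
  hd.continuousOn.comp Complex.continuous_ofReal.continuousOn (fun _ ht => memc ht)

lemma coeff_summable (μ : Measure ℝ) (h : Summable (mom μ))
    {f : ℂ → ℂ} {M : ℝ} (hd : DifferentiableOn ℂ f (ball (0:ℂ) 1))
    (hM : ∀ z ∈ ball (0:ℂ) 1, ‖f z‖ ≤ M) (n : ℕ) :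
    Summable fun k : ℕ => ‖(mom μ (n + k) : ℂ) * tc f k‖ := by
  have hs : Summable fun k => mom μ (n + k) * M := by
    refine Summable.mul_right _ ?_
    simpa [add_comm] using (summable_nat_add_iff n).2 h
  refine Summable.of_nonneg_of_le (fun _ => norm_nonneg _) (fun k => ?_) hs
  rw [norm_mul, Complex.norm_real, Real.norm_of_nonneg (mom_nonneg μ _)]
  exact mul_le_mul_of_nonneg_left (tc_bound hd hM k) (mom_nonneg μ _)

lemma coeff_eq (μ : Measure ℝ) [IsFiniteMeasure μ] (h : Summable (mom μ))
    {f : ℂ → ℂ} {M : ℝ} (hd : DifferentiableOn ℂ f (ball (0:ℂ) 1))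
    (hM : ∀ z ∈ ball (0:ℂ) 1, ‖f z‖ ≤ M) (n : ℕ) :
    hmuCoeff μ f n = ∫ t in Ico (0:ℝ) 1, ((t ^ n : ℝ) : ℂ) * f t ∂μ := by
  have hi : ∀ k, ∫ t in Ico (0:ℝ) 1, ((t ^ (n + k) : ℝ) : ℂ) * tc f k ∂μ
      = (mom μ (n + k) : ℂ) * tc f k := by
    intro k
    rw [integral_mul_const, integral_complex_ofReal, mom]
  have hin : ∀ k, ∫ t in Ico (0:ℝ) 1, ‖((t ^ (n + k) : ℝ) : ℂ) * tc f k‖ ∂μ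
      = ‖(mom μ (n + k) : ℂ) * tc f k‖ := by
    intro k
    rw [norm_mul, Complex.norm_real, Real.norm_of_nonneg (mom_nonneg μ _), mom,
      ← integral_mul_const]
    refine setIntegral_congr_fun measurableSet_Ico ?_
    intro t ht
    simp only
    rw [norm_mul, Complex.norm_real, Real.norm_of_nonneg (pow_nonneg ht.1 _)]
  have := hasSum_integral_of_summable_integral_norm
    (μ := μ.restrict (Ico (0:ℝ) 1)) (F := fun k (t:ℝ) => ((t ^ (n + k) : ℝ) : ℂ) * tc f k)
    (fun k => (intPow μ (n + k)).ofReal.mul_const _)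
    (by simp_rw [hin]; exact coeff_summable μ h hd hM n)
  simp_rw [hi] at this
  rw [hmuCoeff, this.tsum_eq]
  refine setIntegral_congr_fun measurableSet_Ico ?_
  intro t ht
  simp only
  refine HasSum.tsum_eq ?_
  have h2 := (taylor hd (memc ht)).mul_left ((t ^ n : ℝ) : ℂ)
  refine hasSum_fn h2 fun k => ?_
  push_cast
  ring

lemma int_tf (μ : Measure ℝ) [IsFiniteMeasure μ]
    {f : ℂ → ℂ} {M : ℝ} (hd : DifferentiableOn ℂ f (ball (0:ℂ) 1))
    (hM : ∀ z ∈ ball (0:ℂ) 1, ‖f z‖ ≤ M) (n : ℕ) :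
    Integrable (fun t : ℝ => ((t ^ n : ℝ) : ℂ) * f t) (μ.restrict (Ico (0:ℝ) 1)) := by
  refine Integrable.mono' ((intPow μ n).mul_const M) ?_ ?_
  · exact (ContinuousOn.mul (by fun_prop) (contf hd)).aestronglyMeasurable measurableSet_Ico
  filter_upwards [ae_restrict_mem measurableSet_Ico] with t ht
  rw [norm_mul, Complex.norm_real, Real.norm_of_nonneg (pow_nonneg ht.1 _)]
  exact mul_le_mul_of_nonneg_left (hM _ (memc ht)) (pow_nonneg ht.1 _)

lemma int_norm_tf (μ : Measure ℝ) [IsFiniteMeasure μ]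
    {f : ℂ → ℂ} {M : ℝ} (hd : DifferentiableOn ℂ f (ball (0:ℂ) 1))
    (hM : ∀ z ∈ ball (0:ℂ) 1, ‖f z‖ ≤ M) (n : ℕ) :
    ∫ t in Ico (0:ℝ) 1, ‖((t ^ n : ℝ) : ℂ) * f t‖ ∂μ ≤ mom μ n * M := by
  rw [mom, ← integral_mul_const]
  refine setIntegral_mono_on (int_tf μ hd hM n).norm ((intPow μ n).mul_const M)
    measurableSet_Ico ?_
  intro t ht
  rw [norm_mul, Complex.norm_real, Real.norm_of_nonneg (pow_nonneg ht.1 _)]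
  exact mul_le_mul_of_nonneg_left (hM _ (memc ht)) (pow_nonneg ht.1 _)

lemma coeff_le (μ : Measure ℝ) [IsFiniteMeasure μ] (h : Summable (mom μ))
    {f : ℂ → ℂ} {M : ℝ} (hd : DifferentiableOn ℂ f (ball (0:ℂ) 1))
    (hM : ∀ z ∈ ball (0:ℂ) 1, ‖f z‖ ≤ M) (n : ℕ) :
    ‖hmuCoeff μ f n‖ ≤ mom μ n * M := by
  rw [coeff_eq μ h hd hM]
  exact (norm_integral_le_integral_norm _).trans (int_norm_tf μ hd hM n)

lemma term_le (μ : Measure ℝ) [IsFiniteMeasure μ] (h : Summable (mom μ))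
    {f : ℂ → ℂ} {M : ℝ} (hd : DifferentiableOn ℂ f (ball (0:ℂ) 1))
    (hM : ∀ z ∈ ball (0:ℂ) 1, ‖f z‖ ≤ M) (n : ℕ) {z : ℂ} (hz : z ∈ ball (0:ℂ) 1) :
    ‖hmuCoeff μ f n * z ^ n‖ ≤ mom μ n * M := by
  have hz' : ‖z‖ < 1 := by simpa using hz
  rw [norm_mul, norm_pow]
  exact (mul_le_of_le_one_right (norm_nonneg _) (pow_le_one₀ (norm_nonneg _) hz'.le)).trans
    (coeff_le μ h hd hM n)

lemma hmu_props (μ : Measure ℝ) [IsFiniteMeasure μ] (h : Summable (mom μ))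
    {f : ℂ → ℂ} {M : ℝ} (hd : DifferentiableOn ℂ f (ball (0:ℂ) 1))
    (hM : ∀ z ∈ ball (0:ℂ) 1, ‖f z‖ ≤ M) :
    HmuWD μ f ∧ DifferentiableOn ℂ (Hmu μ f) (ball (0:ℂ) 1) ∧
      ∀ z ∈ ball (0:ℂ) 1, ‖Hmu μ f z‖ ≤ (∑' n, mom μ n) * M := by
  have hs : Summable fun n => mom μ n * M := h.mul_right M
  refine ⟨⟨coeff_summable μ h hd hM, fun z hz => ?_⟩, ?_, ?_⟩
  · exact Summable.of_nonneg_of_le (fun _ => norm_nonneg _)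
      (fun n => term_le μ h hd hM n hz) hs
  · exact Complex.differentiableOn_tsum_of_summable_norm hs (fun n => by fun_prop) isOpen_ball
      (fun n z hz => term_le μ h hd hM n hz)
  · intro z hz
    rw [← tsum_mul_right]
    exact tsum_of_norm_bounded hs.hasSum (fun n => term_le μ h hd hM n hz)

lemma norm_tz {t : ℝ} (ht : t ∈ Ico (0:ℝ) 1) {z : ℂ} (hz : z ∈ ball (0:ℂ) 1) :
    ‖(t:ℂ) * z‖ ≤ t := by
  have hz' : ‖z‖ < 1 := by simpa using hz
  rw [norm_mul, Complex.norm_real, Real.norm_of_nonneg ht.1]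
  exact mul_le_of_le_one_right ht.1 hz'.le

lemma norm_den {t : ℝ} (ht : t ∈ Ico (0:ℝ) 1) {z : ℂ} (hz : z ∈ ball (0:ℂ) 1) :
    1 - t ≤ ‖1 - (t:ℂ) * z‖ := by
  have h1 := norm_sub_norm_le (1:ℂ) ((t:ℂ) * z)
  have := norm_tz ht hz
  rw [norm_one] at h1
  linarith

lemma imu_wd (μ : Measure ℝ) [IsFiniteMeasure μ] (h : Summable (mom μ))
    {f : ℂ → ℂ} {M : ℝ} (hd : DifferentiableOn ℂ f (ball (0:ℂ) 1))
    (hM : ∀ z ∈ ball (0:ℂ) 1, ‖f z‖ ≤ M) : ImuWD μ f := by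
  intro z hz
  refine Integrable.mono' ((two_one μ h).const_mul M) ?_ ?_
  · refine (ContinuousOn.div (contf hd) (by fun_prop) ?_).aestronglyMeasurable measurableSet_Ico
    intro t ht h0
    have := norm_den ht hz
    rw [h0, norm_zero] at this
    linarith [ht.2]
  filter_upwards [ae_restrict_mem measurableSet_Ico] with t ht
  have h1 : 0 < 1 - t := by linarith [ht.2]
  rw [norm_div, ← div_eq_mul_inv]
  exact div_le_div₀ ((norm_nonneg _).trans (hM _ (memc ht))) (hM _ (memc ht)) h1 (norm_den ht hz)

lemma imu_eq (μ : Measure ℝ) [IsFiniteMeasure μ] (h : Summable (mom μ))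
    {f : ℂ → ℂ} {M : ℝ} (hd : DifferentiableOn ℂ f (ball (0:ℂ) 1))
    (hM : ∀ z ∈ ball (0:ℂ) 1, ‖f z‖ ≤ M) {z : ℂ} (hz : z ∈ ball (0:ℂ) 1) :
    Imu μ f z = Hmu μ f z := by
  have hz' : ‖z‖ < 1 := by simpa using hz
  have := hasSum_integral_of_summable_integral_norm
    (μ := μ.restrict (Ico (0:ℝ) 1)) (F := fun n (t:ℝ) => ((t ^ n : ℝ) : ℂ) * f t * z ^ n)
    (fun n => (int_tf μ hd hM n).mul_const _) (by
      refine Summable.of_nonneg_of_le (fun n => integral_nonneg fun t => norm_nonneg _)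
        (fun n => ?_) (h.mul_right M)
      simp_rw [norm_mul _ (z ^ n)]
      rw [integral_mul_const, norm_pow]
      exact (mul_le_of_le_one_right (integral_nonneg fun t => norm_nonneg _)
        (pow_le_one₀ (norm_nonneg _) hz'.le)).trans (int_norm_tf μ hd hM n))
  simp_rw [integral_mul_const, ← coeff_eq μ h hd hM] at this
  rw [Hmu, this.tsum_eq, Imu]
  refine setIntegral_congr_fun measurableSet_Ico ?_
  intro t ht
  simp only
  symm
  refine HasSum.tsum_eq ?_
  have h2 := (hasSum_geometric_of_norm_lt_one ((norm_tz ht hz).trans_lt ht.2)).mul_left (f t)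
  rw [← div_eq_mul_inv] at h2
  refine hasSum_fn h2 fun k => ?_
  push_cast
  ring

lemma hinf_le {f : ℂ → ℂ} (hf : MemHinf f) : ∀ z ∈ ball (0:ℂ) 1, ‖f z‖ ≤ hinfNorm f := by
  obtain ⟨-, M, hM⟩ := hf
  intro z hz
  refine le_csSup ⟨M, ?_⟩ ⟨z, hz, rfl⟩
  rintro x ⟨w, hw, rfl⟩
  exact hM w hw

lemma hinf_of_le {f : ℂ → ℂ} {M : ℝ} (hM : ∀ z ∈ ball (0:ℂ) 1, ‖f z‖ ≤ M) : hinfNorm f ≤ M := by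
  refine csSup_le ⟨_, 0, by simp, rfl⟩ ?_
  rintro x ⟨w, hw, rfl⟩
  exact hM w hw

lemma hinf_nonneg (f : ℂ → ℂ) : 0 ≤ hinfNorm f := by
  refine Real.sSup_nonneg ?_
  rintro x ⟨w, hw, rfl⟩
  exact norm_nonneg _

lemma two_four (μ : Measure ℝ) [IsFiniteMeasure μ] (h : Summable (mom μ)) :
    (∀ f : ℂ → ℂ, MemHinf f → HmuWD μ f ∧ MemHinf (Hmu μ f)) ∧
        ∃ C > 0, ∀ f : ℂ → ℂ, MemHinf f → hinfNorm (Hmu μ f) ≤ C * hinfNorm f := by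
  refine ⟨fun f hf => ?_, (∑' n, mom μ n) + 1, ?_, fun f hf => ?_⟩
  · obtain ⟨a, b, c⟩ := hmu_props μ h hf.1 (hinf_le hf)
    exact ⟨a, b, _, c⟩
  · have : 0 ≤ ∑' n, mom μ n := tsum_nonneg (mom_nonneg μ)
    positivity
  · obtain ⟨a, b, c⟩ := hmu_props μ h hf.1 (hinf_le hf)
    have := hinf_nonneg f
    exact (hinf_of_le c).trans (by linarith)

lemma two_three (μ : Measure ℝ) [IsFiniteMeasure μ] (h : Summable (mom μ)) :
    (∀ f : ℂ → ℂ, MemHinf f → ImuWD μ f ∧ MemHinf (Imu μ f)) ∧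
        ∃ C > 0, ∀ f : ℂ → ℂ, MemHinf f → hinfNorm (Imu μ f) ≤ C * hinfNorm f := by
  have e : ∀ f, MemHinf f → ∀ z ∈ ball (0:ℂ) 1, Imu μ f z = Hmu μ f z :=
    fun f hf z hz => imu_eq μ h hf.1 (hinf_le hf) hz
  obtain ⟨h1, C, hC, h2⟩ := two_four μ h
  refine ⟨fun f hf => ⟨imu_wd μ h hf.1 (hinf_le hf), ?_⟩, C, hC, fun f hf => ?_⟩
  · obtain ⟨a, M, hM⟩ := (h1 f hf).2
    exact ⟨a.congr (e f hf), M, fun z hz => by rw [e f hf z hz]; exact hM z hz⟩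
  · refine hinf_of_le fun z hz => ?_
    rw [e f hf z hz]
    exact (hinf_le (h1 f hf).2 z hz).trans (h2 f hf)

lemma two_of (μ : Measure ℝ) (M : ℝ)
    (h : ∀ r ∈ Ico (0:ℝ) 1, ∀ N, ∑ n ∈ Finset.range N, mom μ n * r ^ n ≤ M) :
    Summable (mom μ) := by
  refine summable_of_sum_range_le (c := M) (mom_nonneg μ) fun N => ?_
  have ht : Filter.Tendsto (fun r : ℝ => ∑ n ∈ Finset.range N, mom μ n * r ^ n)
      (nhdsWithin 1 (Iio 1)) (nhds (∑ n ∈ Finset.range N, mom μ n * 1 ^ n)) :=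
    (Continuous.tendsto (by fun_prop) 1).mono_left nhdsWithin_le_nhds
  have := le_of_tendsto ht (by
    filter_upwards [Ioo_mem_nhdsLT (show (0:ℝ) < 1 by norm_num)] with R hR
      using h R ⟨hR.1.le, hR.2⟩ N)
  simpa using this

lemma mem_one : MemHinf (fun _ => 1) := ⟨by fun_prop, 1, by simp⟩

lemma tc_one (k : ℕ) : tc (fun _ => 1) k = if k = 0 then 1 else 0 := by
  rw [tc, iteratedDeriv_const]
  split_ifs with hk <;> simp [hk]

lemma coeff_one (μ : Measure ℝ) (n : ℕ) : hmuCoeff μ (fun _ => 1) n = mom μ n := by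
  rw [hmuCoeff, tsum_eq_single 0]
  · simp [tc_one]
  · intro k hk
    simp [tc_one, hk]

lemma four_two (μ : Measure ℝ)
    (h : ∀ f : ℂ → ℂ, MemHinf f → HmuWD μ f ∧ MemHinf (Hmu μ f)) : Summable (mom μ) := by
  obtain ⟨⟨-, hs⟩, -, M, hM⟩ := h _ mem_one
  refine two_of μ M fun r hr N => ?_
  have h1 := hs r (memc hr)
  have h2 := hM r (memc hr)
  simp only [Hmu, coeff_one] at h1 h2
  have e : ∀ n : ℕ, (mom μ n : ℂ) * (r:ℂ) ^ n = ((mom μ n * r ^ n : ℝ) : ℂ) := by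
    intro n; push_cast; ring
  have nn : ∀ n : ℕ, 0 ≤ mom μ n * r ^ n :=
    fun n => mul_nonneg (mom_nonneg μ n) (pow_nonneg hr.1 n)
  simp_rw [e] at h1 h2
  simp_rw [Complex.norm_real, Real.norm_of_nonneg (nn _)] at h1
  rw [← Complex.ofReal_tsum, Complex.norm_real, Real.norm_of_nonneg (tsum_nonneg nn)] at h2
  exact (h1.sum_le_tsum _ (fun i _ => nn i)).trans h2

lemma three_two (μ : Measure ℝ) [IsFiniteMeasure μ]
    (h : ∀ f : ℂ → ℂ, MemHinf f → ImuWD μ f ∧ MemHinf (Imu μ f)) : Summable (mom μ) := by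
  obtain ⟨hs, -, M, hM⟩ := h _ mem_one
  refine two_of μ M fun r hr N => ?_
  have h1 := hs r (memc hr)
  have h2 := hM r (memc hr)
  have e : ∀ t : ℝ, (1:ℂ) / (1 - t * r) = ((1 / (1 - t * r) : ℝ) : ℂ) := by
    intro t; push_cast; rfl
  simp only [Imu] at h2
  simp_rw [e] at h1 h2
  have h3 : Integrable (fun t : ℝ => 1 / (1 - t * r)) (μ.restrict (Ico (0:ℝ) 1)) := by
    exact Integrable.re h1
  rw [integral_complex_ofReal, Complex.norm_real] at h2
  refine le_trans ?_ ((le_abs_self _).trans h2)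
  simp only [mom, ← integral_mul_const]
  rw [← integral_finsetSum _ (fun i _ => (intPow μ i).mul_const _)]
  refine setIntegral_mono_on (integrable_finsetSum _ (fun i _ => (intPow μ i).mul_const _)) h3
    measurableSet_Ico ?_
  intro t ht
  have a0 : 0 ≤ t * r := mul_nonneg ht.1 hr.1
  have a1 : t * r < 1 := by nlinarith [ht.1, ht.2, hr.1, hr.2]
  rw [one_div, ← tsum_geometric_of_lt_one a0 a1]
  simp_rw [← mul_pow]
  exact (summable_geometric_of_lt_one a0 a1).sum_le_tsum _ (fun i _ => pow_nonneg a0 _)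

/-- Theorem 1.5: equivalent conditions for boundedness of `I_μ` and `H_μ` on `H^∞`. -/
theorem hmu_bounded_Hinf_tfae (μ : Measure ℝ) [IsFiniteMeasure μ]
    (hsupp : μ (Ico (0:ℝ) 1)ᶜ = 0) :
    [ IntegrableOn (fun t : ℝ => (1 - t)⁻¹) (Ico (0:ℝ) 1) μ,
      Summable (mom μ),
      (∀ f : ℂ → ℂ, MemHinf f → ImuWD μ f ∧ MemHinf (Imu μ f)) ∧
        ∃ C > 0, ∀ f : ℂ → ℂ, MemHinf f → hinfNorm (Imu μ f) ≤ C * hinfNorm f,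
      (∀ f : ℂ → ℂ, MemHinf f → HmuWD μ f ∧ MemHinf (Hmu μ f)) ∧
        ∃ C > 0, ∀ f : ℂ → ℂ, MemHinf f → hinfNorm (Hmu μ f) ≤ C * hinfNorm f ].TFAE := by
  tfae_have 1 → 2 := one_two μ
  tfae_have 2 → 1 := two_one μ
  tfae_have 2 → 3 := two_three μ
  tfae_have 2 → 4 := two_four μ
  tfae_have 3 → 2 := fun h => three_two μ h.1
  tfae_have 4 → 2 := fun h => four_two μ h.1
  tfae_finish

end PaperHankel
end
end

section
/- Let μ be a finite positive Borel measure on [0,1). The following conditions are equivalent: (i) the operator I_μ is well defined on Q_s and bounded from Q_s into itself for some s>0; (ii) the operator I_μ is well defined on Q_s and bounded from Q_s into itself for all s>0; (iii) the operator H_μ is well defined on Q_s and bounded from Q_s into itself for some s>0; (iv) the operator H_μ is well defined on Q_s and bounded from Q_s into itself for all s>0; (v) μ is a 1-logarithmic 1-Carleson measure. -/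
open MeasureTheory Set Metric ENNReal

noncomputable section

namespace PaperHankel

/-- `I_μ` is well defined on `Q_{s₁}` and bounded from `Q_{s₁}` into `Q_{s₂}`. -/
def ImuBddQs (μ : Measure ℝ) (s₁ s₂ : ℝ) : Prop :=
  (∀ f : ℂ → ℂ, MemQs s₁ f → ImuWD μ f ∧ MemQs s₂ (Imu μ f)) ∧
  ∃ C > 0, ∀ f : ℂ → ℂ, MemQs s₁ f → qsNorm s₂ (Imu μ f) ≤ C * qsNorm s₁ f

/-- `H_μ` is well defined on `Q_{s₁}` and bounded from `Q_{s₁}` into `Q_{s₂}`. -/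
def HmuBddQs (μ : Measure ℝ) (s₁ s₂ : ℝ) : Prop :=
  (∀ f : ℂ → ℂ, MemQs s₁ f → HmuWD μ f ∧ MemQs s₂ (Hmu μ f)) ∧
  ∃ C > 0, ∀ f : ℂ → ℂ, MemQs s₁ f → qsNorm s₂ (Hmu μ f) ≤ C * qsNorm s₁ f


lemma log_one_add_le {y ε : ℝ} (hy : 0 ≤ y) (h0 : 0 < ε) (h1 : ε ≤ 1) :
    Real.log (1 + y) ≤ y ^ ε / ε := by
  rw [le_div_iff₀ h0, mul_comm, ← Real.log_rpow (by linarith)]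
  have h2 : (1 + y) ^ ε ≤ 1 + y ^ ε := by
    have := Real.rpow_add_le_add_rpow zero_le_one hy h0.le h1
    simpa using this
  calc Real.log ((1 + y) ^ ε) ≤ (1 + y) ^ ε - 1 :=
        Real.log_le_sub_one_of_pos (Real.rpow_pos_of_pos (by linarith) _)
    _ ≤ y ^ ε := by linarith

lemma abs_rpow_integrableOn {p : ℝ} (hp : -1 < p) :
    IntegrableOn (fun x : ℝ => |x| ^ p) (ball (0:ℝ) 2) := by
  have := (integrableOn_fun_norm_addHaar (E := ℝ) volume (f := fun x : ℝ => x ^ p) (r := 2)).2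
  simp only [Real.norm_eq_abs] at this
  apply this
  simp only [Module.finrank_self, Nat.sub_self, pow_zero, one_smul]
  exact (intervalIntegral.integrableOn_Ioo_rpow_iff (by norm_num)).2 hp

def phi (δ : ℝ) (r : ℝ) : ℝ := (r ^ 2)⁻¹ * (4 * r / (r - 1) ^ 2) ^ δ

lemma phi_meas (δ : ℝ) : Measurable (phi δ) := by
  unfold phi; fun_prop

lemma phi_nonneg (δ : ℝ) {r : ℝ} (hr : 0 ≤ r) : 0 ≤ phi δ r := by
  unfold phi; positivity

lemma phi_bound {δ : ℝ} (h0 : 0 < δ) {r : ℝ} (hr : 0 < r) :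
    r * phi δ r = 4 ^ δ * (r ^ (δ - 1) * |r - 1| ^ (- (2 * δ))) := by
  unfold phi
  have h2 : ((r - 1) ^ 2) ^ δ = |r - 1| ^ (2 * δ) := by
    rw [← sq_abs, ← Real.rpow_natCast, ← Real.rpow_mul (abs_nonneg _)]; norm_num
  rw [Real.div_rpow (by positivity) (by positivity), h2, Real.rpow_neg (abs_nonneg _),
    Real.mul_rpow (by norm_num) hr.le, Real.rpow_sub_one hr.ne']
  field_simp

lemma phi_integrable {δ : ℝ} (h0 : 0 < δ) (h1 : δ ≤ 1/4) :
    IntegrableOn (fun r : ℝ => r * phi δ r) (Ioi 0) := by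
  have hm : Measurable (fun r : ℝ => r ^ (δ - 1) * |r - 1| ^ (- (2 * δ))) := by fun_prop
  have key : IntegrableOn (fun r : ℝ => 4 ^ δ * (r ^ (δ - 1) * |r - 1| ^ (- (2 * δ)))) (Ioi 0) := by
    apply Integrable.const_mul
    have e : Ioi (0:ℝ) = Ioo 0 (1/2) ∪ (Icc (1/2) 2 ∪ Ioi 2) := by
      ext x; simp only [mem_Ioi, mem_union, mem_Ioo, mem_Icc]
      constructor
      · intro h
        by_cases h3 : x < 1/2
        · left; exact ⟨h, h3⟩
        · right; push Not at h3
          by_cases h4 : x ≤ 2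
          · left; exact ⟨h3, h4⟩
          · right; linarith
      · rintro (h | h | h) <;> linarith [h]
    change IntegrableOn _ (Ioi 0) _
    rw [e]
    refine IntegrableOn.union ?_ (IntegrableOn.union ?_ ?_)
    · have : IntegrableOn (fun r : ℝ => (1/2:ℝ) ^ (-(2*δ)) * r ^ (δ - 1)) (Ioo 0 (1/2)) :=
        Integrable.const_mul
          ((intervalIntegral.integrableOn_Ioo_rpow_iff (by norm_num)).2 (by linarith)) _
      refine Integrable.mono' this hm.aestronglyMeasurable ?_
      filter_upwards [self_mem_ae_restrict measurableSet_Ioo] with r hr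
      rw [Real.norm_of_nonneg (by have := hr.1; positivity), mul_comm]
      have : (1/2:ℝ) ≤ |r - 1| := by
        rw [abs_of_neg (by linarith [hr.2])]; linarith [hr.2]
      exact mul_le_mul_of_nonneg_right
        (Real.rpow_le_rpow_of_nonpos (by norm_num) this (by linarith))
        (Real.rpow_nonneg hr.1.le _)
    · have h3 : IntegrableOn (fun r : ℝ => |r - 1| ^ (-(2*δ))) (Icc (1/2) 2) := by
        have h4 := ((integrable_indicator_iff measurableSet_ball).2
          (abs_rpow_integrableOn (p := -(2*δ)) (by linarith))).comp_sub_right 1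
        have h5 := h4.integrableOn (s := Icc (1/2) 2)
        refine (integrableOn_congr_fun ?_ measurableSet_Icc).1 h5
        intro r hr
        simp only
        rw [indicator_of_mem]
        simp only [mem_ball, dist_zero_right, Real.norm_eq_abs, abs_lt]
        constructor <;> linarith [hr.1, hr.2]
      refine Integrable.mono' (Integrable.const_mul h3 ((1/2:ℝ) ^ (δ - 1)))
        hm.aestronglyMeasurable ?_
      filter_upwards [self_mem_ae_restrict measurableSet_Icc] with r hr
      rw [Real.norm_of_nonneg (by have := hr.1; positivity)]
      exact mul_le_mul_of_nonneg_right
        (Real.rpow_le_rpow_of_nonpos (by norm_num) hr.1 (by linarith)) (by positivity)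
    · have h3 := (integrableOn_Ioi_rpow_of_lt (a := -1 - δ) (by linarith) (c := 2) (by norm_num))
      refine Integrable.mono' (Integrable.const_mul h3 ((1/2:ℝ) ^ (-(2*δ))))
        hm.aestronglyMeasurable ?_
      filter_upwards [self_mem_ae_restrict measurableSet_Ioi] with r hr
      have hr' : (2:ℝ) < r := hr
      have hr0 : (0:ℝ) < r := by linarith
      rw [Real.norm_of_nonneg (by positivity)]
      have h5 : 1/2 * r ≤ |r - 1| := by
        rw [abs_of_pos (by linarith)]; linarith
      calc r ^ (δ - 1) * |r - 1| ^ (- (2 * δ)) ≤ r ^ (δ - 1) * (1/2 * r) ^ (- (2 * δ)) :=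
            mul_le_mul_of_nonneg_left
              (Real.rpow_le_rpow_of_nonpos (by positivity) h5 (by linarith)) (by positivity)
        _ = (1/2:ℝ) ^ (-(2*δ)) * (r ^ (δ - 1) * r ^ (- (2 * δ))) := by
            rw [Real.mul_rpow (by norm_num) hr0.le]; ring
        _ = _ := by rw [← Real.rpow_add hr0]; congr 2; ring
  refine (integrableOn_congr_fun ?_ measurableSet_Ioi).1 key
  intro r hr
  exact (phi_bound h0 hr).symm

lemma phi_radial {δ : ℝ} (h0 : 0 < δ) (h1 : δ ≤ 1/4) {β : ℝ} (hβ : 0 < β) :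
    ∫⁻ u : ℂ, ENNReal.ofReal ((‖u‖ ^ 2)⁻¹ * (4 * ‖u‖ * β / (‖u‖ - β) ^ 2) ^ δ)
      = ∫⁻ u : ℂ, ENNReal.ofReal (phi δ ‖u‖) := by
  have hm : Measurable (fun u : ℂ => ENNReal.ofReal (phi δ ‖u‖)) :=
    ENNReal.measurable_ofReal.comp ((phi_meas δ).comp measurable_norm)
  have h2 := Measure.map_addHaar_smul (volume : Measure ℂ) (r := β⁻¹) (by positivity)
  have h3 : ∫⁻ u : ℂ, ENNReal.ofReal (phi δ ‖(β⁻¹ : ℝ) • u‖)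
      = ENNReal.ofReal (β ^ 2) * ∫⁻ u : ℂ, ENNReal.ofReal (phi δ ‖u‖) := by
    rw [← lintegral_map (f := fun u : ℂ => ENNReal.ofReal (phi δ ‖u‖)) hm (by fun_prop), h2,
      lintegral_smul_measure]
    congr 2
    simp [Complex.finrank_real_complex]
  have h4 : ∫⁻ u : ℂ, ENNReal.ofReal (phi δ ‖(β⁻¹ : ℝ) • u‖) = ENNReal.ofReal (β ^ 2) *
      ∫⁻ u : ℂ, ENNReal.ofReal ((‖u‖ ^ 2)⁻¹ * (4 * ‖u‖ * β / (‖u‖ - β) ^ 2) ^ δ) := by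
    rw [← lintegral_const_mul _ (by fun_prop)]
    congr 1; ext u
    rw [← ENNReal.ofReal_mul (by positivity)]
    congr 1
    unfold phi
    rw [norm_smul, Real.norm_of_nonneg (by positivity)]
    have h5 : 4 * (β⁻¹ * ‖u‖) / (β⁻¹ * ‖u‖ - 1) ^ 2 = 4 * ‖u‖ * β / (‖u‖ - β) ^ 2 := by
      have : β⁻¹ * ‖u‖ - 1 = β⁻¹ * (‖u‖ - β) := by field_simp
      rw [this, mul_pow, inv_pow]
      by_cases h : ‖u‖ - β = 0
      · simp [h]
      · field_simp
    rw [h5, mul_pow, mul_inv, inv_pow, inv_inv]; ring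
  rw [h3] at h4
  exact ((ENNReal.mul_right_inj (by simp; positivity) ENNReal.ofReal_ne_top).1 h4).symm

lemma phi_finite {δ : ℝ} (h0 : 0 < δ) (h1 : δ ≤ 1/4) :
    ∫⁻ u : ℂ, ENNReal.ofReal (phi δ ‖u‖) < ⊤ := by
  have h := (integrable_fun_norm_addHaar (E := ℂ) volume (f := phi δ)).2 (by
    simpa [Complex.finrank_real_complex] using phi_integrable h0 h1)
  exact h.lintegral_lt_top

lemma green_id (a z : ℂ) : ‖1 - (starRingEnd ℂ) a * z‖ ^ 2
    = ‖z - a‖ ^ 2 + (1 - ‖a‖ ^ 2) * (1 - ‖z‖ ^ 2) := by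
  simp only [← Complex.normSq_eq_norm_sq, Complex.normSq_apply]
  simp
  ring

lemma one_sub_sq_le {z : ℂ} (hz : z ∈ ball (0:ℂ) 1) : 1 - ‖z‖ ^ 2 ≤ 2 * ‖1 - z‖ := by
  have h1 : ‖z‖ < 1 := by simpa using hz
  have h2 : 1 - ‖z‖ ≤ ‖1 - z‖ := by
    have := norm_sub_norm_le (1:ℂ) z; simpa using this
  nlinarith [norm_nonneg z, norm_nonneg (1 - z)]

lemma green_nonneg {a z : ℂ} (ha : a ∈ ball (0:ℂ) 1) (hz : z ∈ ball (0:ℂ) 1) (hne : z ≠ a) :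
    0 ≤ Real.log ‖(1 - (starRingEnd ℂ) a * z) / (z - a)‖ := by
  have hz1 : ‖z‖ < 1 := by simpa using hz
  have ha1 : ‖a‖ < 1 := by simpa using ha
  apply Real.log_nonneg
  have h0 : 0 < ‖z - a‖ := norm_pos_iff.2 (sub_ne_zero.2 hne)
  rw [norm_div, le_div_iff₀ h0, one_mul]
  refine le_of_sq_le_sq ?_ (norm_nonneg _) 
  rw [green_id]
  nlinarith [mul_nonneg (by nlinarith [norm_nonneg a] : 0 ≤ 1 - ‖a‖^2) (by nlinarith [norm_nonneg z] : 0 ≤ 1 - ‖z‖^2)]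

lemma green_le {a z : ℂ} (ha : a ∈ ball (0:ℂ) 1) (hz : z ∈ ball (0:ℂ) 1) 
    (hne : ‖1 - z‖ ≠ ‖1 - a‖) :
    Real.log ‖(1 - (starRingEnd ℂ) a * z) / (z - a)‖ ≤
      1 / 2 * Real.log (1 + 4 * ‖1 - z‖ * ‖1 - a‖ / (‖1 - z‖ - ‖1 - a‖) ^ 2) := by
  have hz1 : ‖z‖ < 1 := by simpa using hz
  have ha1 : ‖a‖ < 1 := by simpa using ha
  have hza : z ≠ a := fun h => hne (by rw [h])
  have h0 : 0 < ‖z - a‖ := norm_pos_iff.2 (sub_ne_zero.2 hza)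
  have hp : 0 ≤ (1 - ‖a‖ ^ 2) := by nlinarith [norm_nonneg a]
  have hq : 0 ≤ (1 - ‖z‖ ^ 2) := by nlinarith [norm_nonneg z]
  have h1 : 1 / 2 * Real.log (‖(1 - (starRingEnd ℂ) a * z) / (z - a)‖ ^ 2)
      = Real.log ‖(1 - (starRingEnd ℂ) a * z) / (z - a)‖ := by
    rw [Real.log_pow]; push_cast; ring
  rw [← h1]
  have h2 : ‖(1 - (starRingEnd ℂ) a * z) / (z - a)‖ ^ 2
      = 1 + (1 - ‖a‖ ^ 2) * (1 - ‖z‖ ^ 2) / ‖z - a‖ ^ 2 := by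
    rw [norm_div, div_pow, green_id]; field_simp
  rw [h2]
  have h3 : (‖1 - z‖ - ‖1 - a‖) ^ 2 ≤ ‖z - a‖ ^ 2 := by
    rw [← sq_abs]
    have := abs_norm_sub_norm_le (1 - z) (1 - a)
    have e : (1 - z) - (1 - a) = -(z - a) := by ring
    rw [e, norm_neg] at this
    gcongr
  have h4 : 0 < (‖1 - z‖ - ‖1 - a‖) ^ 2 := by
    have := sub_ne_zero.2 hne; positivity
  have h5 : (1 - ‖a‖ ^ 2) * (1 - ‖z‖ ^ 2) ≤ 4 * ‖1 - z‖ * ‖1 - a‖ := by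
    have := mul_le_mul (one_sub_sq_le ha) (one_sub_sq_le hz) hq (by positivity)
    linarith
  gcongr

/-- Key lemma. -/
lemma key_K {s : ℝ} (hs : 0 < s) : ∃ K : ℝ, 0 ≤ K ∧ ∀ a ∈ ball (0:ℂ) 1,
    (ENNReal.ofReal Real.pi)⁻¹ * ∫⁻ z in ball (0:ℂ) 1,
      ENNReal.ofReal ((‖1 - z‖ ^ 2)⁻¹ *
        (Real.log ‖(1 - (starRingEnd ℂ) a * z) / (z - a)‖) ^ s) ≤ ENNReal.ofReal K := by
  set δ := min s (1/4) with hδ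
  have h0 : 0 < δ := lt_min hs (by norm_num)
  have h1 : δ ≤ 1/4 := min_le_right _ _
  set ε := δ / s with hε
  have hε0 : 0 < ε := div_pos h0 hs
  have hε1 : ε ≤ 1 := by rw [hε, div_le_one hs]; exact min_le_left _ _
  have hεs : ε * s = δ := by rw [hε]; field_simp
  set c : ℝ := (1 / (2 * ε)) ^ s with hc
  have hc0 : 0 ≤ c := by positivity
  refine ⟨((ENNReal.ofReal Real.pi)⁻¹ * (ENNReal.ofReal c *
    ∫⁻ u : ℂ, ENNReal.ofReal (phi δ ‖u‖))).toReal, ENNReal.toReal_nonneg, ?_⟩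
  intro a ha
  rw [ENNReal.ofReal_toReal]
  swap
  · refine ENNReal.mul_ne_top ?_ (ENNReal.mul_ne_top ENNReal.ofReal_ne_top (phi_finite h0 h1).ne)
    simp [Real.pi_pos]
  gcongr
  have ha1 : ‖a‖ < 1 := by simpa using ha
  have hβ : 0 < ‖1 - a‖ := by
    apply norm_pos_iff.2; intro h
    have : a = 1 := (sub_eq_zero.1 h).symm
    rw [this] at ha1; simp at ha1
  rw [← phi_radial h0 h1 hβ, ← lintegral_const_mul _ (by fun_prop)]
  refine le_trans ?_ (lintegral_sub_left_eq_self (μ := (volume : Measure ℂ)) _ (1:ℂ)).le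
  refine le_trans ?_ (setLIntegral_le_lintegral (ball (0:ℂ) 1) _)
  apply lintegral_mono_ae
  have hnull : ∀ᵐ z ∂(volume.restrict (ball (0:ℂ) 1)), z ∉ sphere (1:ℂ) ‖1 - a‖ := by
    apply ae_restrict_of_ae
    exact measure_eq_zero_iff_ae_notMem.1 (Measure.addHaar_sphere volume _ _)
  filter_upwards [hnull, self_mem_ae_restrict measurableSet_ball] with z hz1 hz
  have hne : ‖1 - z‖ ≠ ‖1 - a‖ := by
    intro h; apply hz1; rw [mem_sphere, dist_comm, dist_eq_norm]; exact h
  have hza : z ≠ a := fun h => hne (by rw [h])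
  rw [← ENNReal.ofReal_mul hc0]
  apply ENNReal.ofReal_le_ofReal
  set y := 4 * ‖1 - z‖ * ‖1 - a‖ / (‖1 - z‖ - ‖1 - a‖) ^ 2 with hy
  have hy0 : 0 ≤ y := by positivity
  have h6 : Real.log ‖(1 - (starRingEnd ℂ) a * z) / (z - a)‖ ≤ 1 / (2 * ε) * y ^ ε := by
    refine (green_le ha hz hne).trans ?_
    have := log_one_add_le hy0 hε0 hε1
    calc _ ≤ 1 / 2 * (y ^ ε / ε) := by gcongr
      _ = _ := by field_simp
  have h7 : Real.log ‖(1 - (starRingEnd ℂ) a * z) / (z - a)‖ ^ s ≤ c * y ^ δ := by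
    refine (Real.rpow_le_rpow (green_nonneg ha hz hza) h6 hs.le).trans ?_
    rw [Real.mul_rpow (by positivity) (by positivity), ← Real.rpow_mul hy0, hεs]
  calc _ ≤ (‖1 - z‖ ^ 2)⁻¹ * (c * y ^ δ) := by gcongr
    _ = _ := by ring

lemma circle_submean {h : ℂ → ℂ} {a : ℂ} {R ρ : ℝ} (hh : DifferentiableOn ℂ h (ball a R))
    (h0 : 0 < ρ) (h1 : ρ < R) :
    ENNReal.ofReal (2 * Real.pi) * ENNReal.ofReal (‖h a‖ ^ 2) ≤
      ∫⁻ θ in Ioo (-Real.pi) Real.pi, ENNReal.ofReal (‖h (circleMap a ρ θ)‖ ^ 2) := by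
  have hd : DiffContOnCl ℂ (fun z => h z ^ 2) (ball a |ρ|) := by
    rw [abs_of_pos h0]
    apply DifferentiableOn.diffContOnCl
    apply DifferentiableOn.pow
    refine hh.mono ?_
    rw [closure_ball _ h0.ne']
    exact closedBall_subset_ball h1
  have h2 := hd.circleAverage
  rw [Real.circleAverage_def] at h2
  have hper : Function.Periodic (fun θ => h (circleMap a ρ θ) ^ 2) (2 * Real.pi) := by
    intro θ; simp only [periodic_circleMap a ρ θ]
  have h3 := hper.intervalIntegral_add_eq 0 (-Real.pi)
  rw [zero_add, show -Real.pi + 2 * Real.pi = Real.pi by ring] at h3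
  rw [h3, intervalIntegral.integral_of_le (by linarith [Real.pi_pos]),
    integral_Ioc_eq_integral_Ioo] at h2
  have h4 : ∫ θ in Ioo (-Real.pi) Real.pi, h (circleMap a ρ θ) ^ 2 =
      ((2 * Real.pi : ℝ) : ℂ) * h a ^ 2 := by
    rw [← h2, Complex.real_smul, ← mul_assoc, ← Complex.ofReal_mul,
      mul_inv_cancel₀ (by positivity)]; simp
  have h5 := enorm_integral_le_lintegral_enorm (μ := volume.restrict (Ioo (-Real.pi) Real.pi))
    (fun θ => h (circleMap a ρ θ) ^ 2)
  rw [h4] at h5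
  have e : ∀ w : ℂ, ‖w ^ 2‖ₑ = ENNReal.ofReal (‖w‖ ^ 2) := by
    intro w; rw [← ofReal_norm, norm_pow]
  simp only [e] at h5
  rw [enorm_mul, e, ← ofReal_norm, Complex.norm_real,
    Real.norm_of_nonneg (by positivity)] at h5
  exact h5

lemma area_submean {h : ℂ → ℂ} {a : ℂ} {R : ℝ} (hR : 0 < R) (hh : DifferentiableOn ℂ h (ball a R)) :
    ENNReal.ofReal (Real.pi * R ^ 2) * ENNReal.ofReal (‖h a‖ ^ 2) ≤
      ∫⁻ z in ball a R, ENNReal.ofReal (‖h z‖ ^ 2) := by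
  classical
  set G : ℂ → ℝ≥0∞ := (ball a R).indicator (fun z => ENNReal.ofReal (‖h z‖ ^ 2)) with hG
  have hGm : Measurable G := by
    have : G = (ball a R).piecewise (fun z => ENNReal.ofReal (‖h z‖ ^ 2)) 0 := by
      rw [hG]; ext z; simp [indicator, piecewise]
    rw [this]
    refine ContinuousOn.measurable_piecewise ?_ continuousOn_const measurableSet_ball
    exact ENNReal.continuous_ofReal.comp_continuousOn (hh.continuousOn.norm.pow 2)
  rw [← lintegral_indicator measurableSet_ball]
  change _ ≤ ∫⁻ z, G z
  rw [← lintegral_add_right_eq_self _ a, ← Complex.lintegral_comp_polarCoord_symm]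
  have hsub : Ioo 0 R ×ˢ Ioo (-Real.pi) Real.pi ⊆ polarCoord.target := by
    rw [polarCoord_target]
    exact prod_mono Ioo_subset_Ioi_self le_rfl
  refine le_trans ?_ (lintegral_mono_set hsub)
  have hmeas : Measurable fun p : ℝ × ℝ =>
      ENNReal.ofReal p.1 • G (Complex.polarCoord.symm p + a) := by
    simp only [smul_eq_mul]
    refine Measurable.mul (by fun_prop) ?_
    apply hGm.comp
    apply Measurable.add_const
    have e : (Complex.polarCoord.symm : ℝ × ℝ → ℂ) =
        fun p => (p.1 : ℂ) * (Real.cos p.2 + Real.sin p.2 * Complex.I) := by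
      ext p; exact Complex.polarCoord_symm_apply p
    rw [e]
    fun_prop
  rw [Measure.volume_eq_prod, ← Measure.prod_restrict, lintegral_prod _ hmeas.aemeasurable]
  have h1 : ∀ ρ ∈ Ioo 0 R, ENNReal.ofReal (2 * Real.pi * ρ) * ENNReal.ofReal (‖h a‖ ^ 2) ≤
      ∫⁻ θ in Ioo (-Real.pi) Real.pi,
        ENNReal.ofReal ρ • G (Complex.polarCoord.symm (ρ, θ) + a) := by
    intro ρ hρ
    have h2 := circle_submean hh hρ.1 hρ.2
    simp only [smul_eq_mul]
    rw [lintegral_const_mul']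
    swap
    · exact ENNReal.ofReal_ne_top
    rw [mul_comm (2 * Real.pi), ENNReal.ofReal_mul hρ.1.le, mul_assoc]
    gcongr
    refine h2.trans (le_of_eq ?_)
    congr 1; ext θ
    have e : Complex.polarCoord.symm (ρ, θ) + a = circleMap a ρ θ := by
      rw [Complex.polarCoord_symm_apply, circleMap, Complex.exp_mul_I]
      push_cast; ring
    rw [e, hG, indicator_of_mem]
    rw [mem_ball, dist_eq_norm]
    simp [circleMap, abs_of_pos hρ.1, hρ.2]
  refine le_trans ?_ (setLIntegral_mono' measurableSet_Ioo h1)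
  rw [lintegral_mul_const _ (by fun_prop)]
  gcongr
  rw [← ofReal_integral_eq_lintegral_ofReal]
  · apply ENNReal.ofReal_le_ofReal
    rw [← integral_Ioc_eq_integral_Ioo, ← intervalIntegral.integral_of_le hR.le,
      intervalIntegral.integral_const_mul, integral_id]
    apply le_of_eq; ring
  · exact (Continuous.integrableOn_Icc (by fun_prop)).mono_set Ioo_subset_Icc_self
  · filter_upwards [self_mem_ae_restrict measurableSet_Ioo] with ρ hρ
    have := hρ.1
    simp only [Pi.zero_apply]
    positivity

lemma qs_bloch {s : ℝ} (hs : 0 < s) {f : ℂ → ℂ} (hf : MemQs s f) {a : ℂ} (ha : a ∈ ball (0:ℂ) 1) :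
    (1 - ‖a‖) * ‖deriv f a‖ ≤ 4 * Real.sqrt (⨆ a ∈ ball (0:ℂ) 1, qsInt s f a).toReal := by
  have ha1 : ‖a‖ < 1 := by simpa using ha
  set R := (1 - ‖a‖) / 4 with hR
  have hR0 : 0 < R := by rw [hR]; linarith
  have hsub : ball a R ⊆ ball (0:ℂ) 1 := by
    apply ball_subset_ball'
    rw [dist_zero_right, hR]; linarith
  have hd : DifferentiableOn ℂ (deriv f) (ball a R) := (hf.1.deriv isOpen_ball).mono hsub
  have h1 := area_submean hR0 hd
  set S := ⨆ a ∈ ball (0:ℂ) 1, qsInt s f a with hS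
  have h2 : qsInt s f a ≤ S := le_iSup₂_of_le a ha le_rfl
  have h3 : (ENNReal.ofReal Real.pi)⁻¹ * ∫⁻ z in ball a R, ENNReal.ofReal (‖deriv f z‖ ^ 2) ≤ S := by
    refine le_trans ?_ h2
    unfold qsInt
    refine mul_le_mul_right ?_ _
    refine le_trans ?_ (lintegral_mono_set hsub)
    apply lintegral_mono_ae
    have hnull : ∀ᵐ z ∂(volume.restrict (ball a R)), z ∉ ({a} : Set ℂ) :=
      ae_restrict_of_ae (measure_eq_zero_iff_ae_notMem.1 (measure_singleton a))
    filter_upwards [hnull, self_mem_ae_restrict measurableSet_ball] with z hz1 hz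
    apply ENNReal.ofReal_le_ofReal
    have hza : z - a ≠ 0 := sub_ne_zero.2 hz1
    have h4 : ‖z - a‖ < R := by rwa [mem_ball, dist_eq_norm] at hz
    have h5 : 0 < ‖z - a‖ := norm_pos_iff.2 hza
    have hz2 : ‖z‖ < 1 := by simpa using hsub hz
    have h6 : 1 - ‖a‖ ≤ ‖1 - (starRingEnd ℂ) a * z‖ := by
      have := norm_sub_norm_le (1:ℂ) ((starRingEnd ℂ) a * z)
      rw [norm_one, norm_mul, RCLike.norm_conj] at this
      nlinarith [norm_nonneg a]
    have h7 : 4 ≤ ‖(1 - (starRingEnd ℂ) a * z) / (z - a)‖ := by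
      rw [norm_div, le_div_iff₀ h5]; linarith
    have h8 : 1 ≤ Real.log ‖(1 - (starRingEnd ℂ) a * z) / (z - a)‖ := by
      rw [Real.le_log_iff_exp_le (by linarith)]
      linarith [Real.exp_one_lt_d9]
    have h9 := Real.one_le_rpow h8 hs.le
    nlinarith [sq_nonneg ‖deriv f z‖]
  have h4 : ENNReal.ofReal (R ^ 2 * ‖deriv f a‖ ^ 2) ≤ S := by
    refine le_trans ?_ h3
    refine le_trans (le_of_eq ?_) (mul_le_mul_right h1 _)
    rw [ENNReal.ofReal_mul (by positivity), ENNReal.ofReal_mul Real.pi_pos.le, ← mul_assoc,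
      ← mul_assoc, ENNReal.inv_mul_cancel (by simp [Real.pi_pos]) ENNReal.ofReal_ne_top, one_mul]
  have h5 : R ^ 2 * ‖deriv f a‖ ^ 2 ≤ S.toReal :=
    (ENNReal.ofReal_le_iff_le_toReal hf.2.ne).1 h4
  have h6 : R * ‖deriv f a‖ ≤ Real.sqrt S.toReal := by
    apply Real.le_sqrt_of_sq_le; rw [mul_pow]; exact h5
  rw [hR] at h6; linarith

lemma log2_ge : (1/2 : ℝ) ≤ Real.log 2 := by linarith [Real.log_two_gt_d9]

lemma qs_growth {s : ℝ} (hs : 0 < s) {f : ℂ → ℂ} (hf : MemQs s f) {z : ℂ} (hz : z ∈ ball (0:ℂ) 1) :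
    ‖f z‖ ≤ 4 * qsNorm s f * Real.log (2 / (1 - ‖z‖)) := by
  have hz1 : ‖z‖ < 1 := by simpa using hz
  set T := Real.sqrt (⨆ a ∈ ball (0:ℂ) 1, qsInt s f a).toReal with hT
  have hT0 : 0 ≤ T := Real.sqrt_nonneg _
  have hpos : ∀ x ∈ Icc (0:ℝ) 1, 0 < 1 - x * ‖z‖ := by
    intro x hx; nlinarith [hx.1, hx.2, norm_nonneg z]
  have hmem : ∀ x ∈ Icc (0:ℝ) 1, ‖(x:ℂ) * z‖ = x * ‖z‖ := by
    intro x hx; rw [norm_mul, Complex.norm_real, Real.norm_of_nonneg hx.1]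
  have hin : ∀ x ∈ Icc (0:ℝ) 1, (x:ℂ) * z ∈ ball (0:ℂ) 1 := by
    intro x hx; rw [mem_ball_zero_iff, hmem x hx]; linarith [hpos x hx]
  have hda : ∀ x ∈ Icc (0:ℝ) 1, HasDerivAt (fun x : ℝ => f ((x:ℂ) * z))
      (deriv f ((x:ℂ) * z) * z) x := by
    intro x hx
    have h1 : HasDerivAt f (deriv f ((x:ℂ) * z)) ((x:ℂ) * z) :=
      (hf.1.differentiableAt (isOpen_ball.mem_nhds (hin x hx))).hasDerivAt
    have h2 : HasDerivAt (fun w : ℂ => w * z) z (x:ℂ) := by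
      simpa using (hasDerivAt_id (x:ℂ)).mul_const z
    exact (HasDerivAt.comp (x:ℂ) h1 h2).comp_ofReal
  have hB : ∀ x ∈ Icc (0:ℝ) 1, HasDerivAt (fun x : ℝ => ‖f 0‖ + 4 * T * (-Real.log (1 - x * ‖z‖)))
      (4 * T * (‖z‖ / (1 - x * ‖z‖))) x := by
    intro x hx
    have h1 : HasDerivAt (fun x : ℝ => 1 - x * ‖z‖) (-‖z‖) x := by
      simpa using ((hasDerivAt_id x).mul_const ‖z‖).const_sub 1
    have h2 := (((h1.log (hpos x hx).ne').neg).const_mul (4 * T)).const_add ‖f 0‖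
    have e : 4 * T * (‖z‖ / (1 - x * ‖z‖)) = 4 * T * -(-‖z‖ / (1 - x * ‖z‖)) := by ring
    rw [e]; exact h2
  have h3 := image_norm_le_of_norm_deriv_right_le_deriv_boundary' (a := 0) (b := 1)
    (f := fun x : ℝ => f ((x:ℂ) * z)) (f' := fun x : ℝ => deriv f ((x:ℂ) * z) * z)
    (B := fun x : ℝ => ‖f 0‖ + 4 * T * (-Real.log (1 - x * ‖z‖)))
    (B' := fun x : ℝ => 4 * T * (‖z‖ / (1 - x * ‖z‖)))
    (fun x hx => (hda x hx).continuousAt.continuousWithinAt)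
    (fun x hx => (hda x (Ico_subset_Icc_self hx)).hasDerivWithinAt)
    (by simp)
    (fun x hx => (hB x hx).continuousAt.continuousWithinAt)
    (fun x hx => (hB x (Ico_subset_Icc_self hx)).hasDerivWithinAt)
    (by
      intro x hx
      have hx' := Ico_subset_Icc_self hx
      have h4 := qs_bloch hs hf (hin x hx')
      rw [hmem x hx'] at h4
      rw [norm_mul]
      have h5 : ‖deriv f ((x:ℂ) * z)‖ ≤ 4 * T / (1 - x * ‖z‖) := by
        rw [le_div_iff₀ (hpos x hx')]; linarith
      calc _ ≤ 4 * T / (1 - x * ‖z‖) * ‖z‖ := by gcongr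
        _ = _ := by ring)
    (right_mem_Icc.2 zero_le_one)
  simp only [Complex.ofReal_one, one_mul] at h3
  refine h3.trans ?_
  rw [Real.log_div (by norm_num) (by linarith)]
  unfold qsNorm
  rw [← hT]
  have h4 : 0 ≤ - Real.log (1 - ‖z‖) := by
    have := Real.log_nonpos (x := 1 - ‖z‖) (by linarith) (by linarith [norm_nonneg z])
    linarith
  have h5 := log2_ge
  have h6 := mul_nonneg (norm_nonneg (f 0)) h4
  have h7 := mul_nonneg (norm_nonneg (f 0)) (sub_nonneg.2 h5)
  have h8 := mul_nonneg hT0 (by linarith : 0 ≤ Real.log 2)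
  nlinarith [norm_nonneg (f 0)]

def Lg (t : ℝ) : ℝ := Real.log (2 / (1 - t))

lemma Lg_meas : Measurable Lg := by unfold Lg; fun_prop

lemma Lg_nonneg {t : ℝ} (h0 : 0 ≤ t) (h1 : t < 1) : 0 ≤ Lg t := by
  unfold Lg
  apply Real.log_nonneg
  rw [le_div_iff₀ (by linarith)]; linarith

lemma dyadic_bound {μ : Measure ℝ} [IsFiniteMeasure μ] (h : IsLogCarleson μ 1 1) :
    ∃ C : ℝ, 0 < C ∧ ∀ (w : ℝ → ℝ≥0∞) (W : ℕ → ℝ≥0∞),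
      (∀ k : ℕ, ∀ t ∈ Ico (1 - (1/2:ℝ) ^ k) (1 - (1/2:ℝ) ^ (k+1)), w t ≤ W k) →
      ∫⁻ t in Ico (0:ℝ) 1, ENNReal.ofReal (Lg t) * w t ∂μ ≤
        ∑' k : ℕ, ENNReal.ofReal (C * (1/2) ^ k) * W k := by
  obtain ⟨C, hC, h⟩ := h
  refine ⟨2 * C, by positivity, fun w W hw => ?_⟩
  have hcov : Ico (0:ℝ) 1 ⊆ ⋃ k : ℕ, Ico (1 - (1/2:ℝ) ^ k) (1 - (1/2:ℝ) ^ (k+1)) := by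
    intro t ht
    obtain ⟨n, h1, h2⟩ := exists_nat_pow_near_of_lt_one (x := 1 - t) (y := 1/2)
      (by linarith [ht.2]) (by linarith [ht.1]) (by norm_num) (by norm_num)
    exact mem_iUnion.2 ⟨n, by constructor <;> linarith⟩
  refine (lintegral_mono_set hcov).trans ((lintegral_iUnion_le _ _).trans ?_)
  apply ENNReal.tsum_le_tsum
  intro k
  have hk0 : (0:ℝ) < (1/2) ^ k := by positivity
  have hk1 : (1/2:ℝ) ^ k ≤ 1 := pow_le_one₀ (by norm_num) (by norm_num)
  have hlog : ∀ m : ℕ, Real.log (2 / (1/2) ^ m) = (m + 1) * Real.log 2 := by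
    intro m
    rw [one_div, inv_pow, div_inv_eq_mul, ← pow_succ', Real.log_pow]; push_cast; ring
  have hl2 : 0 < Real.log 2 := Real.log_pos (by norm_num)
  have hm := h (1 - (1/2:ℝ) ^ k) ⟨by linarith, by linarith⟩
  rw [Real.rpow_one, Real.rpow_one, _root_.sub_sub_cancel, hlog] at hm
  calc ∫⁻ t in Ico (1 - (1/2:ℝ) ^ k) (1 - (1/2:ℝ) ^ (k+1)), ENNReal.ofReal (Lg t) * w t ∂μ
      ≤ ∫⁻ t in Ico (1 - (1/2:ℝ) ^ k) (1 - (1/2:ℝ) ^ (k+1)),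
          ENNReal.ofReal ((k + 2) * Real.log 2) * W k ∂μ := by
        apply setLIntegral_mono' measurableSet_Ico
        intro t ht
        refine mul_le_mul' (ENNReal.ofReal_le_ofReal ?_) (hw k t ht)
        have := hlog (k+1)
        push_cast at this
        rw [show ((k:ℝ) + 2) = k + 1 + 1 by ring, ← this]
        unfold Lg
        have h5 : (0:ℝ) < (1/2) ^ (k+1) := by positivity
        have h6 : (1/2:ℝ) ^ (k+1) ≤ 1 - t := by linarith [ht.2]
        gcongr
        have : 0 < 1 - t := by linarith
        positivity
    _ = ENNReal.ofReal ((k + 2) * Real.log 2) * W k *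
          μ (Ico (1 - (1/2:ℝ) ^ k) (1 - (1/2:ℝ) ^ (k+1))) := by
        rw [setLIntegral_const]
    _ ≤ ENNReal.ofReal ((k + 2) * Real.log 2) * W k * μ (Ico (1 - (1/2:ℝ) ^ k) 1) := by
        have : Ico (1 - (1/2:ℝ) ^ k) (1 - (1/2:ℝ) ^ (k+1)) ⊆ Ico (1 - (1/2:ℝ) ^ k) 1 :=
          Ico_subset_Ico_right (by have : (0:ℝ) < (1/2) ^ (k+1) := by positivity
                                   linarith)
        gcongr
    _ = ENNReal.ofReal ((k + 2) * Real.log 2 * (μ (Ico (1 - (1/2:ℝ) ^ k) 1)).toReal) * W k := by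
        rw [ENNReal.ofReal_mul (p := (k + 2) * Real.log 2) (by positivity),
          ENNReal.ofReal_toReal (measure_ne_top _ _)]; ring
    _ ≤ _ := by
        refine mul_le_mul' (ENNReal.ofReal_le_ofReal ?_) le_rfl
        have h7 : 0 ≤ (μ (Ico (1 - (1/2:ℝ) ^ k) 1)).toReal := ENNReal.toReal_nonneg
        have h8 : 0 ≤ (k:ℝ) * (Real.log 2 * (μ (Ico (1 - (1/2:ℝ) ^ k) 1)).toReal) := by positivity
        nlinarith

lemma one_sub_mul_ge {t : ℝ} (ht : t ∈ Ico (0:ℝ) 1) {z : ℂ} (hz : z ∈ ball (0:ℂ) 1) :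
    1 - t ≤ ‖1 - t * z‖ ∧ ‖1 - z‖ ≤ 2 * ‖1 - t * z‖ := by
  have hz1 : ‖z‖ < 1 := by simpa using hz
  have h1 : 1 - t ≤ ‖1 - t * z‖ := by
    have := norm_sub_norm_le (1:ℂ) (t * z)
    rw [norm_one, norm_mul, Complex.norm_real, Real.norm_of_nonneg ht.1] at this
    nlinarith [ht.1]
  refine ⟨h1, ?_⟩
  have h2 : 1 - z = (1 - t * z) - ((1 - t : ℝ) : ℂ) * z := by push_cast; ring
  have h3 : ‖1 - z‖ ≤ ‖1 - t * z‖ + (1 - t) * ‖z‖ := by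
    rw [h2]; refine (norm_sub_le _ _).trans ?_
    rw [norm_mul, Complex.norm_real, Real.norm_of_nonneg (by linarith [ht.2])]
  nlinarith [ht.2]

lemma geom_min {D : ℝ} (hD : 1/2 ≤ D) :
    Summable (fun k : ℕ => min ((2:ℝ) ^ k) ((1/2) ^ k * D ^ 2)) ∧
    ∑' k : ℕ, min ((2:ℝ) ^ k) ((1/2) ^ k * D ^ 2) ≤ 6 * D := by
  have hs : Summable (fun k : ℕ => (1/2:ℝ) ^ k * D ^ 2) :=
    (summable_geometric_of_lt_one (by norm_num) (by norm_num)).mul_right _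
  have hsum : Summable (fun k : ℕ => min ((2:ℝ) ^ k) ((1/2) ^ k * D ^ 2)) :=
    Summable.of_nonneg_of_le (fun k => by positivity) (fun k => min_le_right _ _) hs
  refine ⟨hsum, ?_⟩
  obtain ⟨n, h1, h2⟩ := exists_nat_pow_near (x := 2 * D) (y := 2) (by linarith) (by norm_num)
  rw [← hsum.sum_add_tsum_nat_add n]
  have hA : ∑ k ∈ Finset.range n, min ((2:ℝ) ^ k) ((1/2) ^ k * D ^ 2) ≤ 2 ^ n := by
    calc _ ≤ ∑ k ∈ Finset.range n, (2:ℝ) ^ k := Finset.sum_le_sum fun k _ => min_le_left _ _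
      _ = 2 ^ n - 1 := by rw [geom_sum_eq (by norm_num)]; norm_num
      _ ≤ _ := by linarith
  have hB : ∑' k : ℕ, min ((2:ℝ) ^ (k + n)) ((1/2) ^ (k + n) * D ^ 2) ≤ 2 * 2 ^ n := by
    calc _ ≤ ∑' k : ℕ, (1/2:ℝ) ^ k * ((1/2) ^ n * D ^ 2) := by
          refine Summable.tsum_le_tsum (fun k => ?_)
            ((summable_nat_add_iff n).2 hsum)
            ((summable_geometric_of_lt_one (by norm_num) (by norm_num)).mul_right _)
          refine (min_le_right _ _).trans (le_of_eq ?_)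
          rw [pow_add]; ring
      _ = 2 * ((1/2) ^ n * D ^ 2) := by
          rw [tsum_mul_right, tsum_geometric_of_lt_one (by norm_num) (by norm_num)]; norm_num
      _ ≤ _ := by
          have hD2 : D ≤ 2 ^ n := by rw [pow_succ] at h2; linarith
          have : (1/2:ℝ) ^ n * 2 ^ n = 1 := by rw [← mul_pow]; norm_num
          have h3 : D ^ 2 ≤ 2 ^ n * 2 ^ n := by nlinarith
          have h4 : (0:ℝ) < (1/2) ^ n := by positivity
          have h5 := mul_le_mul_of_nonneg_left h3 h4.le
          rw [← mul_assoc, this, one_mul] at h5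
          linarith
  linarith

lemma carleson_kernel {μ : Measure ℝ} [IsFiniteMeasure μ] (h : IsLogCarleson μ 1 1) :
    ∃ C : ℝ, 0 < C ∧ ∀ z ∈ ball (0:ℂ) 1,
      ∫⁻ t in Ico (0:ℝ) 1, ENNReal.ofReal (Lg t) * ENNReal.ofReal ((‖1 - t * z‖ ^ 2)⁻¹) ∂μ ≤
        ENNReal.ofReal (C / ‖1 - z‖) := by
  obtain ⟨C, hC, h⟩ := dyadic_bound h
  refine ⟨24 * C, by positivity, fun z hz => ?_⟩
  have hz1 : ‖z‖ < 1 := by simpa using hz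
  have hd : 0 < ‖1 - z‖ := by
    apply norm_pos_iff.2; intro h
    have : z = 1 := (sub_eq_zero.1 h).symm
    rw [this] at hz1; simp at hz1
  set D := 1 / ‖1 - z‖ with hDdef
  have hd2 : ‖1 - z‖ ≤ 2 := by
    have := norm_sub_le (1:ℂ) z; rw [norm_one] at this; linarith
  have hD : 1/2 ≤ D := by rw [hDdef]; gcongr
  obtain ⟨hs, hle⟩ := geom_min hD
  refine (h _ (fun k => ENNReal.ofReal (4 * min (4 ^ k) (D ^ 2))) ?_).trans ?_
  · intro k t ht
    apply ENNReal.ofReal_le_ofReal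
    have hk0 : (0:ℝ) < (1/2) ^ (k+1) := by positivity
    have hk1 : (1/2:ℝ) ^ k ≤ 1 := pow_le_one₀ (by norm_num) (by norm_num)
    have htI : t ∈ Ico (0:ℝ) 1 := ⟨by linarith [ht.1], by linarith [ht.2]⟩
    obtain ⟨h1, h2⟩ := one_sub_mul_ge htI hz
    rw [mul_min_of_nonneg _ _ (by norm_num)]
    apply le_min
    · have h3 : (1/2:ℝ) ^ (k+1) ≤ ‖1 - t * z‖ := by linarith [ht.2]
      have e : (4:ℝ) * 4 ^ k = (((1/2:ℝ) ^ (k+1)) ^ 2)⁻¹ := by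
        rw [← pow_mul, one_div, inv_pow, inv_inv, mul_comm (k+1) 2, pow_mul, pow_succ]; norm_num
        ring
      rw [e]; gcongr
    · have e : 4 * D ^ 2 = ((‖1 - z‖ / 2) ^ 2)⁻¹ := by rw [hDdef]; field_simp; norm_num
      rw [e]
      have : ‖1 - z‖ / 2 ≤ ‖1 - t * z‖ := by linarith
      gcongr
  · have e : ∀ k : ℕ, ENNReal.ofReal (C * (1/2) ^ k) * ENNReal.ofReal (4 * min (4 ^ k) (D ^ 2))
        = ENNReal.ofReal (4 * C * min ((2:ℝ) ^ k) ((1/2) ^ k * D ^ 2)) := by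
      intro k
      rw [← ENNReal.ofReal_mul (by positivity)]
      congr 1
      have h2 : (2:ℝ) ^ k = (1/2) ^ k * 4 ^ k := by rw [← mul_pow]; norm_num
      rw [h2, ← mul_min_of_nonneg _ _ (by positivity)]; ring
    simp only [e]
    rw [← ENNReal.ofReal_tsum_of_nonneg (fun k => by positivity) (hs.mul_left _), tsum_mul_left]
    apply ENNReal.ofReal_le_ofReal
    calc _ ≤ 4 * C * (6 * D) := by gcongr
      _ = _ := by rw [hDdef]; ring

lemma carleson_sqrt {μ : Measure ℝ} [IsFiniteMeasure μ] (h : IsLogCarleson μ 1 1) :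
      ∫⁻ t in Ico (0:ℝ) 1, ENNReal.ofReal (Lg t) * ENNReal.ofReal ((Real.sqrt (1 - t))⁻¹) ∂μ < ⊤ := by
  obtain ⟨C, hC, h⟩ := dyadic_bound h
  refine (h _ (fun k => ENNReal.ofReal (2 * (3/2) ^ k)) ?_).trans_lt ?_
  · intro k t ht
    apply ENNReal.ofReal_le_ofReal
    have hk0 : (0:ℝ) < (1/2) ^ (k+1) := by positivity
    have h1 : (2 * (3/2:ℝ) ^ k)⁻¹ ≤ Real.sqrt (1 - t) := by
      apply Real.le_sqrt_of_sq_le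
      have h2 : (1/2:ℝ) ^ (k+1) ≤ 1 - t := by linarith [ht.2]
      refine le_trans ?_ h2
      rw [inv_pow, mul_pow, ← pow_mul, mul_comm k 2, pow_mul, one_div, inv_pow, pow_succ]
      have : (2:ℝ) ^ k ≤ ((3/2) ^ 2) ^ k := pow_le_pow_left₀ (by norm_num) (by norm_num) _
      gcongr
      have h9 : (2:ℝ) ^ (k+1) = 2 * 2 ^ k := pow_succ' _ _
      nlinarith [pow_pos (by norm_num : (0:ℝ) < 2) k]
    exact inv_le_of_inv_le₀ (by positivity) h1
  · have e : ∀ k : ℕ, ENNReal.ofReal (C * (1/2) ^ k) * ENNReal.ofReal (2 * (3/2) ^ k)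
        = ENNReal.ofReal (2 * C * (3/4) ^ k) := by
      intro k
      rw [← ENNReal.ofReal_mul (by positivity)]
      congr 1
      have h2 : (3/4:ℝ) ^ k = (1/2) ^ k * (3/2) ^ k := by rw [← mul_pow]; norm_num
      rw [h2]; ring
    simp only [e]
    rw [← ENNReal.ofReal_tsum_of_nonneg (fun k => by positivity)
      ((summable_geometric_of_lt_one (by norm_num) (by norm_num)).mul_left _)]
    exact ENNReal.ofReal_lt_top

lemma cauchy_deriv {μ : Measure ℝ} {g : ℝ → ℂ} (hg : IntegrableOn g (Ico (0:ℝ) 1) μ)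
    {z : ℂ} (hz : z ∈ ball (0:ℂ) 1) :
    IntegrableOn (fun t : ℝ => g t / (1 - t * z)) (Ico (0:ℝ) 1) μ ∧
    IntegrableOn (fun t : ℝ => t * g t / (1 - t * z) ^ 2) (Ico (0:ℝ) 1) μ ∧
    HasDerivAt (fun z : ℂ => ∫ t in Ico (0:ℝ) 1, g t / (1 - t * z) ∂μ)
      (∫ t in Ico (0:ℝ) 1, t * g t / (1 - t * z) ^ 2 ∂μ) z := by
  have hz1 : ‖z‖ < 1 := by simpa using hz
  set ρ := (1 + ‖z‖) / 2 with hρ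
  have hρ1 : 0 < 1 - ρ := by rw [hρ]; linarith
  have hlow : ∀ t ∈ Ico (0:ℝ) 1, ∀ w ∈ ball (0:ℂ) ρ, 1 - ρ ≤ ‖1 - t * w‖ := by
    intro t ht w hw
    have hw1 : ‖w‖ < ρ := by simpa using hw
    have := norm_sub_norm_le (1:ℂ) (t * w)
    rw [norm_one, norm_mul, Complex.norm_real, Real.norm_of_nonneg ht.1] at this
    nlinarith [ht.1, ht.2, norm_nonneg w]
  have hzρ : z ∈ ball (0:ℂ) ρ := by rw [mem_ball_zero_iff, hρ]; linarith
  have hm : ∀ w : ℂ, AEStronglyMeasurable (fun t : ℝ => g t / (1 - t * w)) (μ.restrict (Ico 0 1)) := by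
    intro w
    simp only [div_eq_mul_inv]
    exact hg.aestronglyMeasurable.mul (by
      have : Measurable fun t : ℝ => (1 - (t:ℂ) * w)⁻¹ := by fun_prop
      exact this.aestronglyMeasurable)
  have hI : IntegrableOn (fun t : ℝ => g t / (1 - t * z)) (Ico (0:ℝ) 1) μ := by
    refine Integrable.mono' (hg.norm.mul_const (1 - ρ)⁻¹) (hm z) ?_
    filter_upwards [self_mem_ae_restrict measurableSet_Ico] with t ht
    rw [norm_div, div_eq_mul_inv]
    have := hlow t ht z hzρ
    gcongr
  refine ⟨hI, ?_⟩
  refine hasDerivAt_integral_of_dominated_loc_of_deriv_le (𝕜 := ℂ)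
    (F := fun (z : ℂ) (t : ℝ) => g t / (1 - t * z))
    (F' := fun (z : ℂ) (t : ℝ) => t * g t / (1 - t * z) ^ 2)
    (bound := fun t => ‖g t‖ * ((1 - ρ) ^ 2)⁻¹)
    (isOpen_ball.mem_nhds hzρ) (Filter.Eventually.of_forall hm) hI ?_ ?_ (hg.norm.mul_const _) ?_
  · have e : (fun t : ℝ => (t:ℂ) * g t / (1 - t * z) ^ 2) =
        fun t : ℝ => g t * ((t:ℂ) * ((1 - t * z) ^ 2)⁻¹) := by ext t; ring
    rw [e]
    exact hg.aestronglyMeasurable.mul (by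
      have : Measurable fun t : ℝ => (t:ℂ) * ((1 - (t:ℂ) * z) ^ 2)⁻¹ := by fun_prop
      exact this.aestronglyMeasurable)
  · filter_upwards [self_mem_ae_restrict measurableSet_Ico] with t ht w hw
    rw [norm_div, div_eq_mul_inv, norm_mul, norm_pow, Complex.norm_real,
      Real.norm_of_nonneg ht.1]
    have := hlow t ht w hw
    have h1 : t * ‖g t‖ ≤ ‖g t‖ := by nlinarith [norm_nonneg (g t), ht.2]
    gcongr
  · filter_upwards [self_mem_ae_restrict measurableSet_Ico] with t ht w hw
    have h0 : (1 - (t:ℂ) * w) ≠ 0 := by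
      apply norm_pos_iff.1; linarith [hlow t ht w hw]
    have h1 : HasDerivAt (fun w : ℂ => 1 - (t:ℂ) * w) (-t) w := by
      simpa using ((hasDerivAt_id w).const_mul (t:ℂ)).const_sub 1
    have h2 := (hasDerivAt_const w (g t)).div h1 h0
    have e : (t:ℂ) * g t / (1 - t * w) ^ 2 = (0 * (1 - (t:ℂ) * w) - g t * -t) / (1 - (t:ℂ) * w) ^ 2 := by
      ring
    rw [e]; exact h2

lemma tc_hasSum {f : ℂ → ℂ} (hf : DifferentiableOn ℂ f (ball (0:ℂ) 1)) {z : ℂ}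
    (hz : z ∈ ball (0:ℂ) 1) : HasSum (fun k => tc f k * z ^ k) (f z) := by
  have := Complex.hasSum_taylorSeries_on_ball hf hz
  refine this.congr_fun ?_ 
  intro k
  simp only [tc, sub_zero, smul_eq_mul]
  ring

lemma mom_anti (μ : Measure ℝ) [IsFiniteMeasure μ] {m n : ℕ} (h : m ≤ n) : 
    0 ≤ mom μ n ∧ mom μ n ≤ mom μ m := by
  have hi : ∀ k : ℕ, IntegrableOn (fun t : ℝ => t ^ k) (Ico (0:ℝ) 1) μ := by
    intro k
    refine Integrable.mono' (integrable_const (1:ℝ)) (by fun_prop) ?_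
    filter_upwards [self_mem_ae_restrict measurableSet_Ico] with t ht
    rw [norm_pow, Real.norm_of_nonneg ht.1]
    exact pow_le_one₀ ht.1 ht.2.le
  refine ⟨setIntegral_nonneg measurableSet_Ico fun t ht => pow_nonneg ht.1 _, ?_⟩
  exact setIntegral_mono_on (hi n) (hi m) measurableSet_Ico
    fun t ht => pow_le_pow_of_le_one ht.1 ht.2.le h

lemma H_eq_I {μ : Measure ℝ} [IsFiniteMeasure μ] {f : ℂ → ℂ}
    (hf : DifferentiableOn ℂ f (ball (0:ℂ) 1))
    (hs : Summable fun k : ℕ => mom μ k * ‖tc f k‖) :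
    IntegrableOn (fun t : ℝ => f t) (Ico (0:ℝ) 1) μ ∧ HmuWD μ f ∧
      ∀ z ∈ ball (0:ℂ) 1, Hmu μ f z = Imu μ f z := by
  have hball : ∀ t ∈ Ico (0:ℝ) 1, (t:ℂ) ∈ ball (0:ℂ) 1 := by
    intro t ht
    rw [mem_ball_zero_iff, Complex.norm_real, Real.norm_of_nonneg ht.1]; exact ht.2
  have hint : ∀ n k : ℕ, IntegrableOn (fun t : ℝ => tc f k * (t:ℂ) ^ (n + k)) (Ico (0:ℝ) 1) μ := by
    intro n k
    refine Integrable.mono' (integrable_const (‖tc f k‖)) (by fun_prop) ?_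
    filter_upwards [self_mem_ae_restrict measurableSet_Ico] with t ht
    rw [norm_mul, norm_pow, Complex.norm_real, Real.norm_of_nonneg ht.1]
    exact mul_le_of_le_one_right (norm_nonneg _) (pow_le_one₀ ht.1 ht.2.le)
  have hnorm : ∀ n k : ℕ, ∫ t in Ico (0:ℝ) 1, ‖tc f k * (t:ℂ) ^ (n + k)‖ ∂μ =
      mom μ (n + k) * ‖tc f k‖ := by
    intro n k
    unfold mom
    rw [← integral_mul_const]
    apply setIntegral_congr_fun measurableSet_Ico
    intro t ht
    simp only
    rw [norm_mul, norm_pow, Complex.norm_real, Real.norm_of_nonneg ht.1, mul_comm]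
  have hval : ∀ n k : ℕ, ∫ t in Ico (0:ℝ) 1, tc f k * (t:ℂ) ^ (n + k) ∂μ =
      (mom μ (n + k) : ℂ) * tc f k := by
    intro n k
    unfold mom
    rw [integral_const_mul, mul_comm, ← integral_complex_ofReal]
    simp
  have hsn : ∀ n : ℕ, Summable fun k : ℕ => mom μ (n + k) * ‖tc f k‖ := by
    intro n
    refine Summable.of_nonneg_of_le (fun k => ?_) (fun k => ?_) hs
    · exact mul_nonneg (mom_anti μ (le_refl _)).1 (norm_nonneg _)
    · exact mul_le_mul_of_nonneg_right (mom_anti μ (Nat.le_add_left _ _)).2 (norm_nonneg _)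
  have hcoef : ∀ n : ℕ, HasSum (fun k : ℕ => (mom μ (n + k) : ℂ) * tc f k)
      (∫ t in Ico (0:ℝ) 1, (t:ℂ) ^ n * f t ∂μ) := by
    intro n
    have := hasSum_integral_of_summable_integral_norm (hint n) (by simpa only [hnorm] using hsn n)
    simp only [hval] at this
    suffices e : ∫ t in Ico (0:ℝ) 1, (t:ℂ) ^ n * f t ∂μ =
        ∫ t in Ico (0:ℝ) 1, ∑' k : ℕ, tc f k * (t:ℂ) ^ (n + k) ∂μ by
      rw [e]; exact this
    apply setIntegral_congr_fun measurableSet_Ico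
    intro t ht
    simp only
    have h2 := ((tc_hasSum hf (hball t ht)).mul_left ((t:ℂ) ^ n)).tsum_eq
    rw [← h2]
    congr 1; ext k; rw [pow_add]; ring
  have hI : IntegrableOn (fun t : ℝ => f t) (Ico (0:ℝ) 1) μ := by
    refine ⟨?_, ?_⟩
    · refine ContinuousOn.aestronglyMeasurable ?_ measurableSet_Ico
      exact hf.continuousOn.comp Complex.continuous_ofReal.continuousOn hball
    · have h1 : ∫⁻ t in Ico (0:ℝ) 1, ‖f t‖ₑ ∂μ ≤
          ∫⁻ t in Ico (0:ℝ) 1, ∑' k, ‖tc f k * (t:ℂ) ^ (0 + k)‖ₑ ∂μ := by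
        apply setLIntegral_mono' measurableSet_Ico
        intro t ht
        have h2 := tc_hasSum hf (hball t ht)
        rw [← h2.tsum_eq]
        simp only [zero_add]
        exact enorm_tsum_le_tsum_enorm
      refine h1.trans_lt ?_
      rw [lintegral_tsum (fun k => (hint 0 k).1.enorm)]
      have h3 : ∀ k : ℕ, ∫⁻ t in Ico (0:ℝ) 1, ‖tc f k * (t:ℂ) ^ (0 + k)‖ₑ ∂μ =
          ENNReal.ofReal (mom μ (0 + k) * ‖tc f k‖) := by
        intro k
        rw [← hnorm, ofReal_integral_norm_eq_lintegral_enorm (hint 0 k)]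
      simp only [h3]
      exact (hsn 0).tsum_ofReal_lt_top
  have hbd : ∀ z ∈ ball (0:ℂ) 1, ∀ n : ℕ, IntegrableOn (fun t : ℝ => (t:ℂ) ^ n * f t * z ^ n) (Ico (0:ℝ) 1) μ ∧
      ∫ t in Ico (0:ℝ) 1, ‖(t:ℂ) ^ n * f t * z ^ n‖ ∂μ ≤ (∫ t in Ico (0:ℝ) 1, ‖f t‖ ∂μ) * ‖z‖ ^ n := by
    intro z hz n
    have hle : ∀ t ∈ Ico (0:ℝ) 1, ‖(t:ℂ) ^ n * f t * z ^ n‖ ≤ ‖f t‖ * ‖z‖ ^ n := by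
      intro t ht
      rw [norm_mul, norm_mul, norm_pow, norm_pow, Complex.norm_real, Real.norm_of_nonneg ht.1]
      gcongr
      exact mul_le_of_le_one_left (norm_nonneg _) (pow_le_one₀ ht.1 ht.2.le)
    have h1 : IntegrableOn (fun t : ℝ => (t:ℂ) ^ n * f t * z ^ n) (Ico (0:ℝ) 1) μ := by
      refine Integrable.mono' (hI.norm.mul_const (‖z‖ ^ n)) ?_ ?_
      · have hm : AEStronglyMeasurable (fun t : ℝ => (t:ℂ) ^ n) (μ.restrict (Ico 0 1)) := by fun_prop
        exact (hm.mul hI.1).mul_const _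
      · filter_upwards [self_mem_ae_restrict measurableSet_Ico] with t ht using hle t ht
    refine ⟨h1, ?_⟩
    rw [← integral_mul_const]
    exact setIntegral_mono_on h1.norm (hI.norm.mul_const _) measurableSet_Ico hle
  have hco : ∀ n, hmuCoeff μ f n = ∫ t in Ico (0:ℝ) 1, (t:ℂ) ^ n * f t ∂μ := fun n => (hcoef n).tsum_eq
  have hgs : ∀ z ∈ ball (0:ℂ) 1, Summable fun n : ℕ => ∫ t in Ico (0:ℝ) 1, ‖(t:ℂ) ^ n * f t * z ^ n‖ ∂μ := by
    intro z hz
    refine Summable.of_nonneg_of_le (fun n => integral_nonneg fun t => norm_nonneg _)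
      (fun n => (hbd z hz n).2) ((summable_geometric_of_lt_one (norm_nonneg _) ?_).mul_left _)
    simpa using hz
  refine ⟨hI, ⟨fun n => ?_, fun z hz => ?_⟩, fun z hz => ?_⟩
  · refine (hsn n).congr fun k => ?_
    rw [norm_mul, Complex.norm_real, Real.norm_of_nonneg (mom_anti μ (le_refl _)).1]
  · refine Summable.of_nonneg_of_le (fun n => norm_nonneg _) (fun n => ?_) (hgs z hz)
    rw [hco, ← integral_mul_const]
    exact norm_integral_le_integral_norm _
  · have := hasSum_integral_of_summable_integral_norm (fun n => (hbd z hz n).1) (hgs z hz)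
    unfold Hmu Imu
    simp only [hco]
    simp only [integral_mul_const] at this
    rw [this.tsum_eq]
    apply setIntegral_congr_fun measurableSet_Ico
    intro t ht
    simp only
    have hz1 : ‖z‖ < 1 := by simpa using hz
    have h1 : ‖(t:ℂ) * z‖ < 1 := by
      rw [norm_mul, Complex.norm_real, Real.norm_of_nonneg ht.1]
      nlinarith [ht.1, ht.2, norm_nonneg z]
    have h2 := ((hasSum_geometric_of_norm_lt_one h1).mul_left (f t)).tsum_eq
    rw [div_eq_mul_inv, ← h2]
    congr 1; ext n; rw [mul_pow]; ring

lemma bessel {f : ℂ → ℂ} (hf : DifferentiableOn ℂ f (ball (0:ℂ) 1)) {r B : ℝ} (hr0 : 0 ≤ r)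
    (hr1 : r < 1) (hB : ∀ z : ℂ, ‖z‖ = r → ‖f z‖ ≤ B) (N : ℕ) :
    ∑ k ∈ Finset.range N, (‖tc f k‖ * r ^ k) ^ 2 ≤ B ^ 2 := by
  have hrb : (r:ℂ) ∈ ball (0:ℂ) 1 := by
    rw [mem_ball_zero_iff, Complex.norm_real, Real.norm_of_nonneg hr0]; exact hr1
  have hB0 : 0 ≤ B := (norm_nonneg _).trans (hB r (by rw [Complex.norm_real, Real.norm_of_nonneg hr0]))
  have hsum : Summable fun k => ‖tc f k‖ * r ^ k := by
    have := (tc_hasSum hf hrb).summable.norm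
    simpa only [norm_mul, norm_pow, Complex.norm_real, Real.norm_of_nonneg hr0] using this
  have hlim : Filter.Tendsto (fun M : ℕ => (B + ∑' k, ‖tc f (k + M)‖ * r ^ (k + M)) ^ 2)
      Filter.atTop (nhds (B ^ 2)) := by
    have := tendsto_sum_nat_add fun k => ‖tc f k‖ * r ^ k
    simpa using (this.const_add B).pow 2
  refine ge_of_tendsto hlim ?_
  filter_upwards [Filter.eventually_ge_atTop N] with M hM
  refine (Finset.sum_le_sum_of_subset_of_nonneg (Finset.range_mono hM)
    (fun _ _ _ => by positivity)).trans ?_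
  set p : Polynomial ℂ := ∑ k ∈ Finset.range M, Polynomial.monomial k (tc f k * (r:ℂ) ^ k) with hp
  have hcoeff : ∀ k, p.coeff k = if k < M then tc f k * (r:ℂ) ^ k else 0 := by
    intro k
    rw [hp, Polynomial.finsetSum_coeff]
    simp [Polynomial.coeff_monomial]
  have hsup : p.support ⊆ Finset.range M := by
    intro k hk
    rw [Polynomial.mem_support_iff, hcoeff] at hk
    rw [Finset.mem_range]; by_contra h; simp [h] at hk
  have h1 : ∑ k ∈ Finset.range M, (‖tc f k‖ * r ^ k) ^ 2 = ∑ k ∈ p.support, ‖p.coeff k‖ ^ 2 := by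
    rw [Finset.sum_subset hsup]
    · apply Finset.sum_congr rfl
      intro k hk
      rw [hcoeff, if_pos (Finset.mem_range.1 hk), norm_mul, norm_pow, Complex.norm_real,
        Real.norm_of_nonneg hr0]
    · intro k _ hk
      rw [Polynomial.notMem_support_iff.1 hk]; simp
  rw [h1, Polynomial.sum_sq_norm_coeff_eq_circleAverage]
  apply Real.circleAverage_mono_on_of_le_circle
  · apply ContinuousOn.circleIntegrable'
    fun_prop
  · intro w hw
    have hw1 : ‖w‖ = 1 := by simpa using hw
    have hrw : ‖(r:ℂ) * w‖ = r := by
      rw [norm_mul, hw1, Complex.norm_real, Real.norm_of_nonneg hr0, mul_one]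
    have hrwb : (r:ℂ) * w ∈ ball (0:ℂ) 1 := by rw [mem_ball_zero_iff, hrw]; exact hr1
    have hev : p.eval w = ∑ k ∈ Finset.range M, tc f k * ((r:ℂ) * w) ^ k := by
      rw [hp, Polynomial.eval_finsetSum]
      apply Finset.sum_congr rfl
      intro k _
      rw [Polynomial.eval_monomial, mul_pow]; ring
    have hs := tc_hasSum hf hrwb
    have h2 := hs.summable.sum_add_tsum_nat_add M
    rw [hs.tsum_eq] at h2
    have h3 : p.eval w = f (r * w) - ∑' k, tc f (k + M) * ((r:ℂ) * w) ^ (k + M) := by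
      rw [hev, ← h2]; ring
    have h4 : ‖∑' k, tc f (k + M) * ((r:ℂ) * w) ^ (k + M)‖ ≤
        ∑' k, ‖tc f (k + M)‖ * r ^ (k + M) := by
      have e : ∀ k, ‖tc f (k + M) * ((r:ℂ) * w) ^ (k + M)‖ = ‖tc f (k + M)‖ * r ^ (k + M) := by
        intro k; rw [norm_mul, norm_pow, hrw]
      have h5 := norm_tsum_le_tsum_norm (f := fun k => tc f (k + M) * ((r:ℂ) * w) ^ (k + M))
        (by simp only [e]; exact (summable_nat_add_iff M).2 hsum)
      simpa only [e] using h5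
    gcongr
    rw [h3]
    exact (norm_sub_le _ _).trans (add_le_add (hB _ hrw) h4)

lemma l1_bound {f : ℂ → ℂ} (hf : DifferentiableOn ℂ f (ball (0:ℂ) 1)) {t B : ℝ} 
    (ht : t ∈ Ico (0:ℝ) 1) (hB : ∀ z : ℂ, ‖z‖ = Real.sqrt t → ‖f z‖ ≤ B) (N : ℕ) :
    ∑ k ∈ Finset.range N, t ^ k * ‖tc f k‖ ≤ (Real.sqrt (1 - t))⁻¹ * B := by
  have hq0 := Real.sqrt_nonneg t
  have hq1 : Real.sqrt t < 1 := by rw [Real.sqrt_lt' one_pos]; linarith [ht.2]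
  have hB0 : 0 ≤ B := (norm_nonneg _).trans
    (hB (Real.sqrt t) (by rw [Complex.norm_real, Real.norm_of_nonneg hq0]))
  have hb := bessel hf hq0 hq1 hB N
  have ht1 : 0 < 1 - t := by linarith [ht.2]
  refine le_of_abs_le (abs_le_of_sq_le_sq ?_ (by positivity))
  have hqq : ∀ k : ℕ, Real.sqrt t ^ k * Real.sqrt t ^ k = t ^ k := by
    intro k; rw [← mul_pow, Real.mul_self_sqrt ht.1]
  calc (∑ k ∈ Finset.range N, t ^ k * ‖tc f k‖) ^ 2
      = (∑ k ∈ Finset.range N, Real.sqrt t ^ k * (‖tc f k‖ * Real.sqrt t ^ k)) ^ 2 := by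
        congr 1; apply Finset.sum_congr rfl; intro k _; rw [← hqq k]; ring
    _ ≤ (∑ k ∈ Finset.range N, (Real.sqrt t ^ k) ^ 2) *
          ∑ k ∈ Finset.range N, (‖tc f k‖ * Real.sqrt t ^ k) ^ 2 :=
        Finset.sum_mul_sq_le_sq_mul_sq _ _ _
    _ ≤ (1 - t)⁻¹ * B ^ 2 := by
        gcongr
        simp only [sq, hqq]
        rw [← tsum_geometric_of_lt_one ht.1 ht.2]
        exact (summable_geometric_of_lt_one ht.1 ht.2).sum_le_tsum _ (fun k _ => pow_nonneg ht.1 k)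
    _ = _ := by rw [mul_pow, inv_pow, Real.sq_sqrt ht1.le]

lemma log_sqrt_le {t : ℝ} (ht : t ∈ Ico (0:ℝ) 1) :
    Real.log (2 / (1 - Real.sqrt t)) ≤ 2 * Lg t := by
  have hq0 := Real.sqrt_nonneg t
  have hq1 : Real.sqrt t < 1 := by rw [Real.sqrt_lt' one_pos]; linarith [ht.2]
  have hqq := Real.mul_self_sqrt ht.1
  set q := Real.sqrt t
  have h1 : 0 < 1 - q := by linarith
  have ht1 : 0 < 1 - t := by linarith [ht.2]
  unfold Lg
  have : 2 * Real.log (2 / (1 - t)) = Real.log ((2 / (1 - t)) ^ 2) := by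
    rw [Real.log_pow]; norm_num
  rw [this]
  apply Real.log_le_log (by positivity)
  rw [div_pow, div_le_div_iff₀ h1 (by positivity), ← hqq]
  have h2 : (1 - q * q) * (1 + q) ≤ 2 := by nlinarith
  have h3 := mul_le_mul_of_nonneg_left h2 h1.le
  nlinarith

lemma qs_summable {μ : Measure ℝ} [IsFiniteMeasure μ] (h : IsLogCarleson μ 1 1) {s : ℝ} (hs : 0 < s)
    {f : ℂ → ℂ} (hf : MemQs s f) : Summable fun k : ℕ => mom μ k * ‖tc f k‖ := by
  have hQ : 0 ≤ qsNorm s f := by unfold qsNorm; positivity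
  have hgi : IntegrableOn (fun t => Lg t * (Real.sqrt (1 - t))⁻¹) (Ico (0:ℝ) 1) μ := by
    refine ⟨?_, ?_⟩
    · have := Lg_meas
      have h2 : Measurable fun t => Lg t * (Real.sqrt (1 - t))⁻¹ := by fun_prop
      exact h2.aestronglyMeasurable
    · rw [hasFiniteIntegral_iff_ofReal]
      · refine lt_of_le_of_lt ?_ (carleson_sqrt h)
        apply setLIntegral_mono' measurableSet_Ico
        intro t ht
        rw [ENNReal.ofReal_mul (Lg_nonneg ht.1 ht.2)]
      · filter_upwards [self_mem_ae_restrict measurableSet_Ico] with t ht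
        exact mul_nonneg (Lg_nonneg ht.1 ht.2) (by positivity)
  have hi : ∀ k : ℕ, IntegrableOn (fun t : ℝ => t ^ k * ‖tc f k‖) (Ico (0:ℝ) 1) μ := by
    intro k
    refine Integrable.mono' (integrable_const (‖tc f k‖)) (by fun_prop) ?_
    filter_upwards [self_mem_ae_restrict measurableSet_Ico] with t ht
    rw [norm_mul, norm_pow, Real.norm_of_nonneg ht.1, norm_norm]
    exact mul_le_of_le_one_left (norm_nonneg _) (pow_le_one₀ ht.1 ht.2.le)
  refine summable_of_sum_range_le (c := ∫ t in Ico (0:ℝ) 1,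
    8 * qsNorm s f * (Lg t * (Real.sqrt (1 - t))⁻¹) ∂μ)
    (fun k => mul_nonneg (mom_anti μ (le_refl _)).1 (norm_nonneg _)) fun N => ?_
  have e : ∑ k ∈ Finset.range N, mom μ k * ‖tc f k‖ =
      ∫ t in Ico (0:ℝ) 1, ∑ k ∈ Finset.range N, t ^ k * ‖tc f k‖ ∂μ := by
    rw [integral_finsetSum _ (fun k _ => hi k)]
    apply Finset.sum_congr rfl
    intro k _
    rw [integral_mul_const]; rfl
  rw [e]
  refine setIntegral_mono_on (integrable_finsetSum _ (fun k _ => hi k)) (hgi.const_mul _)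
    measurableSet_Ico ?_
  intro t ht
  refine (l1_bound hf.1 ht (B := 4 * qsNorm s f * (2 * Lg t)) ?_ N).trans (le_of_eq (by ring))
  intro z hz
  have hq1 : Real.sqrt t < 1 := by rw [Real.sqrt_lt' one_pos]; linarith [ht.2]
  have hzb : z ∈ ball (0:ℂ) 1 := by rw [mem_ball_zero_iff, hz]; exact hq1
  refine (qs_growth hs hf hzb).trans ?_
  rw [hz]
  exact mul_le_mul_of_nonneg_left (log_sqrt_le ht) (by positivity)

lemma qs_of_deriv {s : ℝ} (hs : 0 < s) : ∃ K : ℝ, 0 ≤ K ∧ ∀ (F : ℂ → ℂ) (M : ℝ), 0 ≤ M →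
    DifferentiableOn ℂ F (ball (0:ℂ) 1) →
    (∀ z ∈ ball (0:ℂ) 1, ‖deriv F z‖ ≤ M / ‖1 - z‖) →
    MemQs s F ∧ Real.sqrt (⨆ a ∈ ball (0:ℂ) 1, qsInt s F a).toReal ≤ M * K := by
  obtain ⟨K, hK0, hK⟩ := key_K hs
  refine ⟨Real.sqrt K, Real.sqrt_nonneg _, fun F M hM hF hd => ?_⟩
  have h1 : (⨆ a ∈ ball (0:ℂ) 1, qsInt s F a) ≤ ENNReal.ofReal (M ^ 2 * K) := by
    refine iSup₂_le fun a ha => ?_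
    have h2 : qsInt s F a ≤ (ENNReal.ofReal Real.pi)⁻¹ * ∫⁻ z in ball (0:ℂ) 1,
        ENNReal.ofReal (M ^ 2) * ENNReal.ofReal ((‖1 - z‖ ^ 2)⁻¹ *
          (Real.log ‖(1 - (starRingEnd ℂ) a * z) / (z - a)‖) ^ s) := by
      unfold qsInt
      refine mul_le_mul' le_rfl ?_
      apply setLIntegral_mono' measurableSet_ball
      intro z hz
      rw [← ENNReal.ofReal_mul (by positivity)]
      apply ENNReal.ofReal_le_ofReal
      have hL : 0 ≤ (Real.log ‖(1 - (starRingEnd ℂ) a * z) / (z - a)‖) ^ s := by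
        by_cases hza : z = a
        · rw [hza]; simp [Real.zero_rpow hs.ne']
        · exact Real.rpow_nonneg (green_nonneg ha hz hza) _
      rw [← mul_assoc]
      apply mul_le_mul_of_nonneg_right _ hL
      rw [← div_eq_mul_inv, ← div_pow]
      exact pow_le_pow_left₀ (norm_nonneg _) (hd z hz) 2
    refine h2.trans ?_
    rw [lintegral_const_mul' _ _ ENNReal.ofReal_ne_top, mul_left_comm,
      ENNReal.ofReal_mul (by positivity)]
    gcongr
    exact hK a ha
  refine ⟨⟨hF, h1.trans_lt ENNReal.ofReal_lt_top⟩, ?_⟩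
  have h3 : (⨆ a ∈ ball (0:ℂ) 1, qsInt s F a).toReal ≤ M ^ 2 * K :=
    ENNReal.toReal_le_of_le_ofReal (by positivity) h1
  refine (Real.sqrt_le_sqrt h3).trans (le_of_eq ?_)
  rw [Real.sqrt_mul (by positivity), Real.sqrt_sq hM]

lemma qsInt_congr {s : ℝ} {F G : ℂ → ℂ} (h : ∀ z ∈ ball (0:ℂ) 1, F z = G z) (a : ℂ) :
    qsInt s F a = qsInt s G a := by
  unfold qsInt
  congr 1
  apply setLIntegral_congr_fun measurableSet_ball
  intro z hz
  have : deriv F z = deriv G z := by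
    apply Filter.EventuallyEq.deriv_eq
    filter_upwards [isOpen_ball.mem_nhds hz] with w hw using h w hw
  simp only [this]

lemma MemQs_congr {s : ℝ} {F G : ℂ → ℂ} (h : ∀ z ∈ ball (0:ℂ) 1, F z = G z) (hG : MemQs s G) :
    MemQs s F := by
  refine ⟨hG.1.congr h, ?_⟩
  simp only [qsInt_congr h]
  exact hG.2

lemma qsNorm_congr {s : ℝ} {F G : ℂ → ℂ} (h : ∀ z ∈ ball (0:ℂ) 1, F z = G z) :
    qsNorm s F = qsNorm s G := by
  unfold qsNorm
  simp only [qsInt_congr h, h 0 (by simp)]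

def f0 (z : ℂ) : ℂ := (Real.log 2 : ℂ) - Complex.log (1 - z)

lemma f0_real {t : ℝ} (ht : t < 1) : f0 t = (Lg t : ℂ) := by
  unfold f0 Lg
  rw [Real.log_div (by norm_num) (by linarith)]
  rw [Complex.ofReal_sub, Complex.ofReal_log (x := 1 - t) (by linarith)]
  push_cast; rfl

lemma f0_deriv {z : ℂ} (hz : z ∈ ball (0:ℂ) 1) : HasDerivAt f0 (1 / (1 - z)) z := by
  have hz1 : ‖z‖ < 1 := by simpa using hz
  have hsl : 1 - z ∈ Complex.slitPlane := by
    left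
    have := (Complex.re_le_norm z)
    simp; linarith
  have h1 : HasDerivAt (fun w : ℂ => 1 - w) (-1) z := by
    simpa using (hasDerivAt_id z).const_sub 1
  have := (h1.clog hsl).const_sub (Real.log 2 : ℂ)
  exact this.congr_deriv (by ring)

lemma f0_mem {s : ℝ} (hs : 0 < s) : MemQs s f0 := by
  obtain ⟨K, -, h⟩ := qs_of_deriv hs
  refine (h f0 1 (by norm_num) (fun z hz => (f0_deriv hz).differentiableAt.differentiableWithinAt)
    (fun z hz => ?_)).1
  rw [(f0_deriv hz).deriv, norm_div, norm_one]

lemma Lg_mono {x t : ℝ} (h : x ≤ t) (ht : t < 1) : Lg x ≤ Lg t := by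
  unfold Lg
  have h1 : 0 < 1 - t := by linarith
  have h2 : 0 < 1 - x := by linarith
  apply Real.log_le_log (by positivity)
  gcongr

lemma necessity {μ : Measure ℝ} [IsFiniteMeasure μ] {s : ℝ} (hs : 0 < s)
    (hI : IntegrableOn (fun t : ℝ => f0 t) (Ico (0:ℝ) 1) μ) (hQ : MemQs s (Imu μ f0)) :
    IsLogCarleson μ 1 1 := by
  set ρ := Real.sqrt (⨆ a ∈ ball (0:ℂ) 1, qsInt s (Imu μ f0) a).toReal with hρ
  have hρ0 : 0 ≤ ρ := Real.sqrt_nonneg _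
  refine ⟨32 * ρ + 4 * μ.real univ + 1, by positivity, fun x hx => ?_⟩
  rw [Real.rpow_one, Real.rpow_one]
  change μ.real (Ico x 1) * Lg x ≤ _
  have hL0 := Lg_nonneg hx.1 hx.2
  have hx1 : 0 < 1 - x := by linarith [hx.2]
  rcases lt_or_ge x (1/2) with hlt | hge
  · have h1 : Lg x ≤ 2 := by
      unfold Lg
      have : Real.log (2 / (1 - x)) ≤ Real.log (2 ^ 2) := by
        apply Real.log_le_log (by positivity)
        rw [div_le_iff₀ hx1]; linarith
      rw [Real.log_pow] at this
      have := Real.log_two_lt_d9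
      push_cast at *
      linarith
    have h2 : μ.real (Ico x 1) ≤ μ.real univ := measureReal_mono (subset_univ _)
    have h3 : 0 ≤ μ.real univ := measureReal_nonneg
    have h4 : μ.real (Ico x 1) * Lg x ≤ μ.real univ * 2 := by gcongr
    nlinarith [mul_nonneg hρ0 hx1.le]
  · have hxb : (x:ℂ) ∈ ball (0:ℂ) 1 := by
      rw [mem_ball_zero_iff, Complex.norm_real, Real.norm_of_nonneg hx.1]; exact hx.2
    obtain ⟨-, hint, hder⟩ := cauchy_deriv hI hxb
    have hb := qs_bloch hs hQ hxb
    rw [← hρ, Complex.norm_real, Real.norm_of_nonneg hx.1] at hb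
    have hd : deriv (Imu μ f0) x = ((∫ t in Ico (0:ℝ) 1, t * Lg t / (1 - t * x) ^ 2 ∂μ : ℝ) : ℂ) := by
      have : deriv (Imu μ f0) x = ∫ t in Ico (0:ℝ) 1, t * f0 t / (1 - t * x) ^ 2 ∂μ := hder.deriv
      rw [this, ← integral_complex_ofReal]
      apply setIntegral_congr_fun measurableSet_Ico
      intro t ht
      simp only [f0_real ht.2]
      push_cast; rfl
    have hintR : IntegrableOn (fun t : ℝ => t * Lg t / (1 - t * x) ^ 2) (Ico (0:ℝ) 1) μ := by
      refine IntegrableOn.congr_fun hint.re ?_ measurableSet_Ico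
      intro t ht
      simp only [f0_real ht.2]
      have : (t:ℂ) * (Lg t : ℂ) / (1 - t * x) ^ 2 = ((t * Lg t / (1 - t * x) ^ 2 : ℝ) : ℂ) := by
        push_cast; rfl
      exact (congrArg Complex.re this).trans (Complex.ofReal_re _)
    have hpos : ∀ t ∈ Ico (0:ℝ) 1, 0 ≤ t * Lg t / (1 - t * x) ^ 2 := by
      intro t ht
      have := Lg_nonneg ht.1 ht.2
      have := ht.1
      positivity
    have hsub : Ico x 1 ⊆ Ico (0:ℝ) 1 := Ico_subset_Ico_left hx.1
    have hlow : μ.real (Ico x 1) * (x * Lg x / (1 - x * x) ^ 2) ≤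
        ∫ t in Ico (0:ℝ) 1, t * Lg t / (1 - t * x) ^ 2 ∂μ := by
      calc _ = ∫ t in Ico x 1, x * Lg x / (1 - x * x) ^ 2 ∂μ := by
            rw [setIntegral_const, smul_eq_mul]
        _ ≤ ∫ t in Ico x 1, t * Lg t / (1 - t * x) ^ 2 ∂μ := by
            refine setIntegral_mono_on (integrableOn_const (measure_ne_top _ _))
              (hintR.mono_set hsub) measurableSet_Ico ?_
            intro t ht
            have h1 := Lg_mono ht.1 ht.2
            have h2 : 0 < 1 - t * x := by nlinarith [ht.2, hx.1, hx.2]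
            have h3 : t * x ≥ x * x := mul_le_mul_of_nonneg_right ht.1 hx.1
            have h4 : 0 ≤ t := hx.1.trans ht.1
            have h5 := ht.1
            have h6 := hx.1
            have h61 := hL0.trans h1
            have h62 : 0 ≤ t * Lg t := by positivity
            gcongr
        _ ≤ _ := setIntegral_mono_set hintR
            (by filter_upwards [self_mem_ae_restrict measurableSet_Ico] with t ht using hpos t ht)
            hsub.eventuallyLE
    rw [hd, Complex.norm_real, Real.norm_of_nonneg (setIntegral_nonneg measurableSet_Ico hpos)] at hb
    have h7 : μ.real (Ico x 1) * (Lg x / (8 * (1 - x) ^ 2)) ≤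
        μ.real (Ico x 1) * (x * Lg x / (1 - x * x) ^ 2) := by
      apply mul_le_mul_of_nonneg_left _ measureReal_nonneg
      have h8 : 1 - x * x ≤ 2 * (1 - x) := by nlinarith
      have h9 : 0 < 1 - x * x := by nlinarith
      rw [div_le_div_iff₀ (by positivity) (by positivity)]
      have h10 : (1 - x * x) ^ 2 ≤ (2 * (1 - x)) ^ 2 := by gcongr
      have h11 : Lg x * (1 - x * x) ^ 2 ≤ Lg x * (2 * (1 - x)) ^ 2 := by gcongr
      have h12 : 0 ≤ Lg x * (1 - x) ^ 2 := by positivity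
      nlinarith
    have h13 : (1 - x) * (μ.real (Ico x 1) * (Lg x / (8 * (1 - x) ^ 2))) ≤ 4 * ρ :=
      (mul_le_mul_of_nonneg_left (h7.trans hlow) hx1.le).trans hb
    have h14 : (1 - x) * (μ.real (Ico x 1) * (Lg x / (8 * (1 - x) ^ 2))) =
        μ.real (Ico x 1) * Lg x / (8 * (1 - x)) := by field_simp
    rw [h14, div_le_iff₀ (by positivity)] at h13
    have h15 : 0 ≤ μ.real univ := measureReal_nonneg
    nlinarith [mul_nonneg h15 hx1.le]

lemma sufficiency {μ : Measure ℝ} [IsFiniteMeasure μ] (h : IsLogCarleson μ 1 1) {s : ℝ} (hs : 0 < s) :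
    ImuBddQs μ s s := by
  obtain ⟨C, hC, hk⟩ := carleson_kernel h
  obtain ⟨K, hK0, hK⟩ := qs_of_deriv hs
  have hLi : IntegrableOn Lg (Ico (0:ℝ) 1) μ ∧ ∫ t in Ico (0:ℝ) 1, Lg t ∂μ ≤ C := by
    have h0 := hk 0 (by simp)
    simp only [mul_zero, sub_zero, norm_one, one_pow, inv_one, ENNReal.ofReal_one, mul_one,
      div_one] at h0
    have hnn : 0 ≤ᵐ[μ.restrict (Ico (0:ℝ) 1)] Lg := by
      filter_upwards [self_mem_ae_restrict measurableSet_Ico] with t ht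
      exact Lg_nonneg ht.1 ht.2
    have h1 : IntegrableOn Lg (Ico (0:ℝ) 1) μ := by
      refine ⟨Lg_meas.aestronglyMeasurable, ?_⟩
      rw [hasFiniteIntegral_iff_ofReal hnn]
      exact h0.trans_lt ENNReal.ofReal_lt_top
    refine ⟨h1, ?_⟩
    rw [integral_eq_lintegral_of_nonneg_ae hnn h1.1]
    exact ENNReal.toReal_le_of_le_ofReal hC.le h0
  have hball : ∀ t ∈ Ico (0:ℝ) 1, (t:ℂ) ∈ ball (0:ℂ) 1 := by
    intro t ht
    rw [mem_ball_zero_iff, Complex.norm_real, Real.norm_of_nonneg ht.1]; exact ht.2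
  have main : ∀ f : ℂ → ℂ, MemQs s f → ImuWD μ f ∧ MemQs s (Imu μ f) ∧
      qsNorm s (Imu μ f) ≤ (4 * C + 4 * C * K) * qsNorm s f := by
    intro f hf
    have hQ : 0 ≤ qsNorm s f := by unfold qsNorm; positivity
    have hg : ∀ t ∈ Ico (0:ℝ) 1, ‖f t‖ ≤ 4 * qsNorm s f * Lg t := by
      intro t ht
      have := qs_growth hs hf (hball t ht)
      rwa [Complex.norm_real, Real.norm_of_nonneg ht.1] at this
    have hI : IntegrableOn (fun t : ℝ => f t) (Ico (0:ℝ) 1) μ := by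
      refine Integrable.mono' (hLi.1.const_mul (4 * qsNorm s f)) ?_ ?_
      · refine ContinuousOn.aestronglyMeasurable ?_ measurableSet_Ico
        exact hf.1.continuousOn.comp Complex.continuous_ofReal.continuousOn hball
      · filter_upwards [self_mem_ae_restrict measurableSet_Ico] with t ht using hg t ht
    have hder : ∀ z ∈ ball (0:ℂ) 1, ‖deriv (Imu μ f) z‖ ≤ (4 * C * qsNorm s f) / ‖1 - z‖ := by
      intro z hz
      obtain ⟨-, hint, hd⟩ := cauchy_deriv hI hz
      have : deriv (Imu μ f) z = ∫ t in Ico (0:ℝ) 1, t * f t / (1 - t * z) ^ 2 ∂μ := hd.deriv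
      rw [this]
      have h3 : ENNReal.ofReal ‖∫ t in Ico (0:ℝ) 1, t * f t / (1 - t * z) ^ 2 ∂μ‖ ≤
          ENNReal.ofReal ((4 * C * qsNorm s f) / ‖1 - z‖) := by
        rw [ofReal_norm]
        refine (enorm_integral_le_lintegral_enorm _).trans ?_
        calc _ ≤ ∫⁻ t in Ico (0:ℝ) 1, ENNReal.ofReal (4 * qsNorm s f) *
              (ENNReal.ofReal (Lg t) * ENNReal.ofReal ((‖1 - t * z‖ ^ 2)⁻¹)) ∂μ := by
              apply setLIntegral_mono' measurableSet_Ico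
              intro t ht
              have hL := Lg_nonneg ht.1 ht.2
              rw [← ofReal_norm, ← ENNReal.ofReal_mul hL, ← ENNReal.ofReal_mul (by positivity)]
              apply ENNReal.ofReal_le_ofReal
              rw [norm_div, norm_mul, norm_pow, Complex.norm_real, Real.norm_of_nonneg ht.1,
                div_eq_mul_inv, ← mul_assoc]
              apply mul_le_mul_of_nonneg_right _ (by positivity)
              have h5 := hg t ht
              nlinarith [norm_nonneg (f t), ht.1, ht.2]
          _ ≤ ENNReal.ofReal (4 * qsNorm s f) * ENNReal.ofReal (C / ‖1 - z‖) := by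
              rw [lintegral_const_mul' _ _ ENNReal.ofReal_ne_top]
              gcongr
              exact hk z hz
          _ = _ := by
              rw [← ENNReal.ofReal_mul (by positivity)]
              congr 1; ring
      exact (ENNReal.ofReal_le_ofReal_iff (by positivity)).1 h3
    have hdiff : DifferentiableOn ℂ (Imu μ f) (ball (0:ℂ) 1) := by
      intro z hz
      obtain ⟨-, -, hd⟩ := cauchy_deriv hI hz
      exact (show DifferentiableAt ℂ (Imu μ f) z from hd.differentiableAt).differentiableWithinAt
    obtain ⟨hmem, hle⟩ := hK (Imu μ f) (4 * C * qsNorm s f) (by positivity) hdiff hder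
    refine ⟨fun z hz => (cauchy_deriv hI hz).1, hmem, ?_⟩
    have hz0 : ‖Imu μ f 0‖ ≤ 4 * qsNorm s f * C := by
      unfold Imu
      simp only [mul_zero, sub_zero, div_one]
      refine (norm_integral_le_integral_norm _).trans ?_
      refine (setIntegral_mono_on hI.norm (hLi.1.const_mul (4 * qsNorm s f)) measurableSet_Ico
        hg).trans ?_
      rw [integral_const_mul]
      exact mul_le_mul_of_nonneg_left hLi.2 (by positivity)
    unfold qsNorm at hz0 hle ⊢
    linarith
  exact ⟨fun f hf => ⟨(main f hf).1, (main f hf).2.1⟩, 4 * C + 4 * C * K, by positivity,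
    fun f hf => (main f hf).2.2⟩

/-- Theorem 1.7: boundedness of `I_μ` and `H_μ` on the `Q_s` spaces is equivalent to `μ`
being a `1`-logarithmic `1`-Carleson measure. -/
theorem imu_hmu_bounded_Qs_tfae (μ : Measure ℝ) [IsFiniteMeasure μ]
    (hsupp : μ (Ico (0:ℝ) 1)ᶜ = 0) :
    [ (∃ s : ℝ, 0 < s ∧ ImuBddQs μ s s),
      (∀ s : ℝ, 0 < s → ImuBddQs μ s s),
      (∃ s : ℝ, 0 < s ∧ HmuBddQs μ s s),
      (∀ s : ℝ, 0 < s → HmuBddQs μ s s),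
      IsLogCarleson μ 1 1 ].TFAE := by
  tfae_have 2 → 1 := fun h => ⟨1, one_pos, h 1 one_pos⟩
  tfae_have 4 → 3 := fun h => ⟨1, one_pos, h 1 one_pos⟩
  tfae_have 5 → 2 := fun h s hs => sufficiency h hs
  tfae_have 5 → 4 := by
    intro h s hs
    obtain ⟨h1, C, hC, h2⟩ := sufficiency h hs
    have key : ∀ f : ℂ → ℂ, MemQs s f → HmuWD μ f ∧ ∀ z ∈ ball (0:ℂ) 1, Hmu μ f z = Imu μ f z :=
      fun f hf => (H_eq_I hf.1 (qs_summable h hs hf)).2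
    refine ⟨fun f hf => ⟨(key f hf).1, MemQs_congr (key f hf).2 (h1 f hf).2⟩, C, hC, fun f hf => ?_⟩
    rw [qsNorm_congr (key f hf).2]
    exact h2 f hf
  tfae_have 1 → 5 := by
    rintro ⟨s, hs, h, -⟩
    obtain ⟨hw, hm⟩ := h f0 (f0_mem hs)
    refine necessity hs ?_ hm
    simpa using hw 0 (by simp)
  tfae_have 3 → 5 := by
    rintro ⟨s, hs, h, -⟩
    obtain ⟨hw, hm⟩ := h f0 (f0_mem hs)
    have hsum : Summable fun k : ℕ => mom μ k * ‖tc f0 k‖ := by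
      refine (hw.1 0).congr fun k => ?_
      rw [zero_add, norm_mul, Complex.norm_real, Real.norm_of_nonneg (mom_anti μ (le_refl _)).1]
    obtain ⟨hI, -, he⟩ := H_eq_I (f0_mem hs).1 hsum
    exact necessity hs hI (MemQs_congr (fun z hz => (he z hz).symm) hm)
  tfae_finish

end PaperHankel
end
end

section
/- Suppose 1<p<∞ and let μ be a finite positive Borel measure on [0,1) such that the operator H_μ is well defined on the Besov space B^p and bounded from B^p into itself. Then μ is a (1 - 1/p)-logarithmic 1-Carleson measure. -/
open MeasureTheory Set Metric ENNReal

noncomputable section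

namespace PaperHankel

lemma circ_mean (h : ℂ → ℂ) (a : ℂ) (r : ℝ) (hr : 0 < r) (U : Set ℂ)
    (hd : DifferentiableOn ℂ h U) (hU : closedBall a r ⊆ U) :
    ∫ θ in Ioo (-Real.pi) Real.pi, h (a + r * (Real.cos θ + Real.sin θ * Complex.I))
      = (2 * Real.pi : ℝ) • h a := by
  have h1 : Real.circleAverage h a r = h a := by
    apply DiffContOnCl.circleAverage
    rw [abs_of_pos hr]
    exact (hd.mono hU).diffContOnCl_ball subset_rfl
  rw [← h1, Real.circleAverage, smul_smul, mul_inv_cancel₀ (by positivity), one_smul]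
  have hper : Function.Periodic (fun θ => h (circleMap a r θ)) (2 * Real.pi) :=
    fun θ => by simp [periodic_circleMap a r θ]
  have := hper.intervalIntegral_add_eq 0 (-Real.pi)
  rw [zero_add] at this
  rw [this, intervalIntegral.integral_of_le (by linarith [Real.pi_pos]),
    show -Real.pi + 2 * Real.pi = Real.pi by ring, integral_Ioc_eq_integral_Ioo]
  congr 1
  ext θ
  simp [circleMap, Complex.exp_mul_I]

lemma area_mean (h : ℂ → ℂ) (a : ℂ) (R : ℝ) (hR : 0 < R) (U : Set ℂ)
    (hd : DifferentiableOn ℂ h U) (hU : closedBall a R ⊆ U) :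
    ∫ z in ball a R, h z = (Real.pi * R ^ 2 : ℝ) • h a := by
  have e1 : ∫ z in ball a R, h z = ∫ z, (ball (0:ℂ) R).indicator (fun z => h (a + z)) z := by
    rw [← integral_indicator measurableSet_ball, ← integral_add_left_eq_self _ a]
    congr 1
    ext z
    by_cases hz : ‖z‖ < R <;> simp [indicator, hz]
  rw [e1, ← Complex.integral_comp_polarCoord_symm]
  have e2 : ∀ q ∈ polarCoord.target,
      q.1 • (ball (0:ℂ) R).indicator (fun z => h (a + z)) (Complex.polarCoord.symm q)
      = (Iio R ×ˢ univ).indicator (fun q : ℝ × ℝ => q.1 • h (a + q.1 * (Real.cos q.2 + Real.sin q.2 * Complex.I))) q := by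
    rintro ⟨r, θ⟩ hq
    have hr : 0 < r := hq.1
    have hn := Complex.norm_polarCoord_symm (r, θ)
    rw [abs_of_pos hr] at hn
    by_cases hz : r < R
    · rw [indicator_of_mem (by rw [mem_ball_zero_iff, hn]; exact hz), indicator_of_mem (by simpa using hz)]
      simp
    · rw [indicator_of_notMem (by rw [mem_ball_zero_iff, hn]; exact hz), indicator_of_notMem (by simpa using hz)]
      simp
  rw [setIntegral_congr_fun polarCoord.open_target.measurableSet e2,
    setIntegral_indicator (measurableSet_Iio.prod MeasurableSet.univ)]
  have e3 : polarCoord.target ∩ (Iio R ×ˢ univ) = Ioo 0 R ×ˢ Ioo (-Real.pi) Real.pi := by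
    ext ⟨r, θ⟩
    simp [polarCoord]; tauto
  rw [e3, Measure.volume_eq_prod, setIntegral_prod]
  · have : ∀ r ∈ Ioo 0 R, ∫ θ in Ioo (-Real.pi) Real.pi, r • h (a + r * (Real.cos θ + Real.sin θ * Complex.I))
        = (r * (2 * Real.pi)) • h a := by
      intro r hr
      rw [integral_smul, circ_mean h a r hr.1 U hd ((closedBall_subset_closedBall hr.2.le).trans hU), smul_smul]
    rw [setIntegral_congr_fun measurableSet_Ioo this, integral_smul_const,
      ← integral_Ioc_eq_integral_Ioo, ← intervalIntegral.integral_of_le hR.le]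
    simp only [intervalIntegral.integral_mul_const, integral_id]
    congr 1
    ring
  · have hc : ContinuousOn (fun q : ℝ × ℝ => q.1 • h (a + q.1 * (Real.cos q.2 + Real.sin q.2 * Complex.I)))
        (Icc 0 R ×ˢ Icc (-Real.pi) Real.pi) := by
      refine continuousOn_fst.smul (hd.continuousOn.comp (by fun_prop) ?_)
      rintro ⟨r, θ⟩ hq
      apply hU
      have hn := Complex.norm_polarCoord_symm (r, θ)
      rw [Complex.polarCoord_symm_apply] at hn
      rw [mem_closedBall, dist_eq_norm, add_sub_cancel_left, hn, abs_of_nonneg hq.1.1]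
      exact hq.1.2
    exact (hc.integrableOn_compact (isCompact_Icc.prod isCompact_Icc)).mono_set
      (prod_mono Ioo_subset_Icc_self Ioo_subset_Icc_self)

lemma submean (p : ℝ) (hp : 1 < p) (h : ℂ → ℂ) (a : ℂ) (R : ℝ) (hR : 0 < R) (U : Set ℂ)
    (hd : DifferentiableOn ℂ h U) (hU : closedBall a R ⊆ U) :
    Real.pi * R ^ 2 * ‖h a‖ ^ p ≤ ∫ z in ball a R, ‖h z‖ ^ p := by
  have hc : ContinuousOn h (closedBall a R) := hd.continuousOn.mono hU
  have hi1 : IntegrableOn (fun z => ‖h z‖) (ball a R) :=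
    (hc.norm.integrableOn_compact (isCompact_closedBall a R)).mono_set ball_subset_closedBall
  have hi2 : IntegrableOn (fun z => ‖h z‖ ^ p) (ball a R) :=
    ((hc.norm.rpow_const (fun _ _ => Or.inr (by linarith))).integrableOn_compact
      (isCompact_closedBall a R)).mono_set ball_subset_closedBall
  have hv : volume.real (ball a R) = Real.pi * R ^ 2 := by
    rw [Measure.real, Complex.volume_ball]
    simp [hR.le, mul_comm]
  have hvp : 0 < Real.pi * R ^ 2 := by positivity
  have hj := (convexOn_rpow hp.le).map_set_average_le (μ := volume) (t := ball a R)
    (f := fun z => ‖h z‖) (continuousOn_id.rpow_const (fun _ _ => Or.inr (by linarith))) isClosed_Ici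
    (measure_ball_pos _ _ hR).ne' measure_ball_lt_top.ne
    (Filter.Eventually.of_forall fun z => norm_nonneg _) hi1 hi2
  rw [setAverage_eq, setAverage_eq, hv, smul_eq_mul, smul_eq_mul] at hj
  have h3 : ‖h a‖ ≤ (Real.pi * R ^ 2)⁻¹ * ∫ z in ball a R, ‖h z‖ := by
    have := norm_integral_le_integral_norm (μ := volume.restrict (ball a R)) h
    rw [area_mean h a R hR U hd hU, norm_smul, Real.norm_of_nonneg hvp.le] at this
    rw [inv_mul_eq_div, le_div_iff₀ hvp]
    linarith
  have h4 := (Real.rpow_le_rpow (norm_nonneg _) h3 (by linarith : 0 ≤ p)).trans hj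
  rw [inv_mul_eq_div, le_div_iff₀ hvp] at h4
  linarith

lemma norm_low (ρ θ : ℝ) (h0 : 0 ≤ ρ) (hθ : |θ| ≤ Real.pi) :
    (1 - ρ + |θ| / Real.pi) / 2 ≤ ‖(1:ℂ) - ρ * (Real.cos θ + Real.sin θ * Complex.I)‖ := by
  have hpi := Real.pi_pos
  have hsq : ‖(1:ℂ) - ρ * (Real.cos θ + Real.sin θ * Complex.I)‖ ^ 2
      = (1 - ρ) ^ 2 + 2 * ρ * (1 - Real.cos θ) := by
    rw [Complex.sq_norm, Complex.normSq_apply]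
    simp only [Complex.sub_re, Complex.sub_im, Complex.mul_re, Complex.mul_im, Complex.add_re,
      Complex.add_im, Complex.ofReal_re, Complex.ofReal_im, Complex.one_re, Complex.one_im,
      Complex.I_re, Complex.I_im]
    have := Real.sin_sq_add_cos_sq θ
    linear_combination (ρ ^ 2) * this
  have hcos := Real.cos_le_one_sub_mul_cos_sq hθ
  have hx : (|θ| / Real.pi) ^ 2 = θ ^ 2 / Real.pi ^ 2 := by rw [div_pow, sq_abs]
  have hx1 : |θ| / Real.pi ≤ 1 := (div_le_one hpi).2 hθ
  have hx0 : 0 ≤ |θ| / Real.pi := by positivity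
  set x := |θ| / Real.pi with hxd
  have hcos2 : 2 * x ^ 2 ≤ 1 - Real.cos θ := by
    rw [hx]; have : 2 * (θ ^ 2 / Real.pi ^ 2) = 2 / Real.pi ^ 2 * θ ^ 2 := by ring
    linarith
  have a1 : 1 - ρ ≤ ‖(1:ℂ) - ρ * (Real.cos θ + Real.sin θ * Complex.I)‖ := by
    refine (abs_le_of_sq_le_sq' ?_ (norm_nonneg _)).2
    rw [hsq]; nlinarith [sq_nonneg x]
  have a2 : x ≤ ‖(1:ℂ) - ρ * (Real.cos θ + Real.sin θ * Complex.I)‖ := by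
    refine (abs_le_of_sq_le_sq' ?_ (norm_nonneg _)).2
    rw [hsq]
    have : x ^ 2 ≤ 1 := by nlinarith
    nlinarith [mul_nonneg (sq_nonneg (1 - ρ)) (sub_nonneg.2 this), mul_le_mul_of_nonneg_left hcos2 h0,
      mul_nonneg h0 (sq_nonneg x), mul_nonneg (mul_nonneg h0 h0) (sq_nonneg x)]
  linarith

lemma inner_int (p : ℝ) (hp : 1 < p) : ∃ K > 0, ∀ s > 0,
    ∫⁻ θ : ℝ, ENNReal.ofReal (((s + |θ| / Real.pi) / 2) ^ (-p)) ≤ ENNReal.ofReal (K * s ^ (1 - p)) := by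
  have hI : Integrable (fun x : ℝ => (1 + ‖x‖) ^ (-p)) := by
    apply integrable_one_add_norm
    simpa using hp
  have hpi := Real.pi_pos
  have hJ : 0 ≤ ∫ x : ℝ, (1 + ‖x‖) ^ (-p) := integral_nonneg fun x => by positivity
  refine ⟨2 ^ p * Real.pi * ((∫ x : ℝ, (1 + ‖x‖) ^ (-p)) + 1), by positivity, fun s hs => ?_⟩
  have he : ∀ θ : ℝ, ((s + |θ| / Real.pi) / 2) ^ (-p)
      = (2 ^ p * s ^ (-p)) * (1 + ‖θ / (Real.pi * s)‖) ^ (-p) := by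
    intro θ
    have : (s + |θ| / Real.pi) / 2 = 2⁻¹ * (s * (1 + ‖θ / (Real.pi * s)‖)) := by
      rw [Real.norm_eq_abs, abs_div, abs_of_pos (by positivity : 0 < Real.pi * s)]
      field_simp
    rw [this, Real.mul_rpow (by positivity) (by positivity), Real.mul_rpow (by positivity) (by positivity),
      Real.inv_rpow (by positivity), Real.rpow_neg (by positivity), inv_inv, mul_assoc]
  simp_rw [he]
  rw [← ofReal_integral_eq_lintegral_ofReal]
  · apply ENNReal.ofReal_le_ofReal
    rw [integral_const_mul, Measure.integral_comp_div (fun x : ℝ => (1 + ‖x‖) ^ (-p)), smul_eq_mul,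
      abs_of_pos (by positivity : 0 < Real.pi * s), sub_eq_add_neg, Real.rpow_add hs, Real.rpow_one]
    have : 0 < s ^ (-p) := by positivity
    calc 2 ^ p * s ^ (-p) * (Real.pi * s * ∫ x : ℝ, (1 + ‖x‖) ^ (-p))
        = 2 ^ p * Real.pi * (∫ x : ℝ, (1 + ‖x‖) ^ (-p)) * (s * s ^ (-p)) := by ring
      _ ≤ _ := by gcongr; linarith
  · exact (hI.comp_div (by positivity)).const_mul _
  · exact Filter.Eventually.of_forall fun x => by positivity

lemma radial_int (p : ℝ) (hp : 1 < p) (b : ℝ) (hb0 : 0 < b) (hb1 : b < 1) :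
    ∫⁻ r in Ioo (0:ℝ) 1, ENNReal.ofReal ((1 - r) ^ (p - 2) * (1 - b * r) ^ (1 - p))
      ≤ ENNReal.ofReal (1 / (p - 1) + Real.log (1 / (1 - b))) := by
  have hδ : 0 < 1 - b := by linarith
  have hsub : Ioo (0:ℝ) 1 ⊆ Ioc 0 b ∪ Ioc b 1 := by
    rw [Ioc_union_Ioc_eq_Ioc hb0.le hb1.le]; exact Ioo_subset_Ioc_self
  have hlog : 0 ≤ Real.log (1 / (1 - b)) := Real.log_nonneg (by rw [le_div_iff₀ hδ]; linarith)
  have I1 : ∫⁻ r in Ioc 0 b, ENNReal.ofReal ((1 - r) ^ (p - 2) * (1 - b * r) ^ (1 - p))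
      ≤ ENNReal.ofReal (Real.log (1 / (1 - b))) := by
    have hle : ∀ r ∈ Ioc 0 b, ENNReal.ofReal ((1 - r) ^ (p - 2) * (1 - b * r) ^ (1 - p))
        ≤ ENNReal.ofReal ((1 - r)⁻¹) := by
      intro r hr
      have h1r : 0 < 1 - r := by linarith [hr.2]
      apply ENNReal.ofReal_le_ofReal
      have : (1 - b * r) ^ (1 - p) ≤ (1 - r) ^ (1 - p) :=
        Real.rpow_le_rpow_of_nonpos h1r (by nlinarith [hr.1]) (by linarith)
      calc _ ≤ (1 - r) ^ (p - 2) * (1 - r) ^ (1 - p) := by gcongr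
        _ = (1 - r)⁻¹ := by
          rw [← Real.rpow_add h1r, show p - 2 + (1 - p) = -1 by ring, Real.rpow_neg_one]
    refine (setLIntegral_mono' measurableSet_Ioc hle).trans ?_
    rw [← ofReal_integral_eq_lintegral_ofReal]
    · rw [← intervalIntegral.integral_of_le hb0.le,
        intervalIntegral.integral_comp_sub_left (fun x => x⁻¹) 1, sub_zero,
        integral_inv_of_pos hδ one_pos]
    · apply IntegrableOn.mono_set _ Ioc_subset_Icc_self
      have hc : ContinuousOn (fun r : ℝ => (1 - r)⁻¹) (Icc 0 b) := by
        apply ContinuousOn.inv₀ (f := fun r : ℝ => 1 - r) (by fun_prop)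
        intro r hr
        have := hr.2
        linarith
      exact hc.integrableOn_compact isCompact_Icc
    · refine (ae_restrict_iff' measurableSet_Ioc).2 (Filter.Eventually.of_forall fun r hr => ?_)
      have : 0 < 1 - r := by linarith [hr.2]
      simp only [Pi.zero_apply]; positivity
  have I2 : ∫⁻ r in Ioc b 1, ENNReal.ofReal ((1 - r) ^ (p - 2) * (1 - b * r) ^ (1 - p))
      ≤ ENNReal.ofReal (1 / (p - 1)) := by
    have hle : ∀ r ∈ Ioc b 1, ENNReal.ofReal ((1 - r) ^ (p - 2) * (1 - b * r) ^ (1 - p))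
        ≤ ENNReal.ofReal ((1 - r) ^ (p - 2) * (1 - b) ^ (1 - p)) := by
      intro r hr
      have h1r : 0 ≤ 1 - r := by linarith [hr.2]
      apply ENNReal.ofReal_le_ofReal
      have : (1 - b * r) ^ (1 - p) ≤ (1 - b) ^ (1 - p) :=
        Real.rpow_le_rpow_of_nonpos hδ (by nlinarith [hr.2]) (by linarith)
      gcongr
    refine (setLIntegral_mono' measurableSet_Ioc hle).trans ?_
    have hii : IntervalIntegrable (fun r : ℝ => (1 - r) ^ (p - 2)) volume b 1 := by
      have := (intervalIntegral.intervalIntegrable_rpow' (a := 1 - b) (b := 0) (by linarith : -1 < p - 2)).comp_sub_left 1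
      simpa using this
    rw [← ofReal_integral_eq_lintegral_ofReal]
    · rw [← intervalIntegral.integral_of_le hb1.le, intervalIntegral.integral_mul_const,
        intervalIntegral.integral_comp_sub_left (fun x => x ^ (p - 2)) 1, sub_self,
        integral_rpow (Or.inl (by linarith)), show p - 2 + 1 = p - 1 by ring,
        Real.zero_rpow (by linarith), sub_zero, div_mul_eq_mul_div, ← Real.rpow_add hδ]
      simp
    · exact ((intervalIntegrable_iff_integrableOn_Ioc_of_le hb1.le).1 hii).mul_const _
    · refine (ae_restrict_iff' measurableSet_Ioc).2 (Filter.Eventually.of_forall fun r hr => ?_)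
      have : 0 ≤ 1 - r := by linarith [hr.2]
      simp only [Pi.zero_apply]; positivity
  calc _ ≤ ∫⁻ r in Ioc 0 b ∪ Ioc b 1, ENNReal.ofReal ((1 - r) ^ (p - 2) * (1 - b * r) ^ (1 - p)) :=
        lintegral_mono_set hsub
    _ ≤ _ := lintegral_union_le _ _ _
    _ ≤ ENNReal.ofReal (Real.log (1 / (1 - b))) + ENNReal.ofReal (1 / (p - 1)) := add_le_add I1 I2
    _ = _ := by
      rw [← ENNReal.ofReal_add hlog (by have : 0 < p - 1 := by linarith
                                        positivity), add_comm]

lemma disc_int (p : ℝ) (hp : 1 < p) : ∃ K > 0, ∀ b : ℝ, 0 < b → b < 1 →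
    ∫⁻ z in ball (0:ℂ) 1, ENNReal.ofReal ((1 - ‖z‖ ^ 2) ^ (p - 2) * ‖1 - b * z‖ ^ (-p))
      ≤ ENNReal.ofReal (K * (1 / (p - 1) + Real.log (1 / (1 - b)))) := by
  obtain ⟨K, hK, hin⟩ := inner_int p hp
  have hpi := Real.pi_pos
  refine ⟨2 ^ p * K, by positivity, fun b hb0 hb1 => ?_⟩
  rw [← lintegral_indicator measurableSet_ball, ← Complex.lintegral_comp_polarCoord_symm]
  set F : ℝ × ℝ → ℝ≥0∞ := fun q => ENNReal.ofReal (2 ^ p * (1 - q.1) ^ (p - 2)) *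
    ENNReal.ofReal (((1 - b * q.1 + |q.2| / Real.pi) / 2) ^ (-p)) with hF
  have hFm : Measurable F := by
    rw [hF]
    fun_prop
  have e2 : ∀ q ∈ polarCoord.target,
      ENNReal.ofReal q.1 • (ball (0:ℂ) 1).indicator (fun z => ENNReal.ofReal ((1 - ‖z‖ ^ 2) ^ (p - 2) * ‖1 - b * z‖ ^ (-p))) (Complex.polarCoord.symm q)
      ≤ (Ioo 0 1 ×ˢ univ).indicator F q := by
    rintro ⟨r, θ⟩ hq
    have hr : 0 < r := hq.1
    have hθ : |θ| ≤ Real.pi := abs_le.2 ⟨hq.2.1.le, hq.2.2.le⟩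
    have hn := Complex.norm_polarCoord_symm (r, θ)
    rw [abs_of_pos hr] at hn
    by_cases hz : r < 1
    · rw [indicator_of_mem (by rw [mem_ball_zero_iff, hn]; exact hz), indicator_of_mem (by simp [hr, hz]), hn]
      rw [smul_eq_mul]
      simp only [hF]
      have hs : 0 < 1 - b * r := by nlinarith
      have h1r : 0 < 1 - r := by linarith
      have l1 := norm_low (b * r) θ (by positivity) hθ
      have l2 : ‖1 - b * Complex.polarCoord.symm (r, θ)‖ ^ (-p) ≤ ((1 - b * r + |θ| / Real.pi) / 2) ^ (-p) := by
        apply Real.rpow_le_rpow_of_nonpos (by positivity) _ (by linarith)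
        convert l1 using 2
        simp [mul_assoc]
      have l3 : (1 - r ^ 2) ^ (p - 2) ≤ 2 ^ p * (1 - r) ^ (p - 2) := by
        rw [show 1 - r ^ 2 = (1 + r) * (1 - r) by ring, Real.mul_rpow (by positivity) h1r.le]
        gcongr
        calc (1 + r) ^ (p - 2) ≤ (1 + r) ^ p := Real.rpow_le_rpow_of_exponent_le (by linarith) (by linarith)
          _ ≤ 2 ^ p := by gcongr; linarith
      rw [← ENNReal.ofReal_mul hr.le, ← ENNReal.ofReal_mul (by positivity)]
      apply ENNReal.ofReal_le_ofReal
      have h1r2 : 0 < 1 - r ^ 2 := by nlinarith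
      calc r * ((1 - r ^ 2) ^ (p - 2) * ‖1 - b * Complex.polarCoord.symm (r, θ)‖ ^ (-p))
          ≤ 1 * ((1 - r ^ 2) ^ (p - 2) * ‖1 - b * Complex.polarCoord.symm (r, θ)‖ ^ (-p)) := by gcongr
        _ ≤ _ := by rw [one_mul]; gcongr
    · rw [indicator_of_notMem (by rw [mem_ball_zero_iff, hn]; exact hz)]
      simp
  refine (setLIntegral_mono' polarCoord.open_target.measurableSet e2).trans ?_
  rw [lintegral_indicator (measurableSet_Ioo.prod MeasurableSet.univ)]
  calc _ ≤ ∫⁻ q in Ioo (0:ℝ) 1 ×ˢ univ, F q := by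
        apply lintegral_mono' _ le_rfl
        exact Measure.restrict_mono_measure Measure.restrict_le_self _
    _ = ∫⁻ r in Ioo (0:ℝ) 1, ∫⁻ θ, F (r, θ) := by
        rw [Measure.volume_eq_prod, setLIntegral_prod _ hFm.aemeasurable]
        simp
    _ ≤ ∫⁻ r in Ioo (0:ℝ) 1, ENNReal.ofReal (2 ^ p * K) *
          ENNReal.ofReal ((1 - r) ^ (p - 2) * (1 - b * r) ^ (1 - p)) := by
        apply setLIntegral_mono' measurableSet_Ioo
        intro r hr
        have h1r : 0 < 1 - r := by linarith [hr.2]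
        have hs : 0 < 1 - b * r := by nlinarith [hr.1, hr.2]
        simp only [hF]
        rw [lintegral_const_mul _ (by fun_prop)]
        refine (mul_le_mul_right (hin _ hs) _).trans ?_
        rw [← ENNReal.ofReal_mul (by positivity), ← ENNReal.ofReal_mul (by positivity)]
        apply ENNReal.ofReal_le_ofReal
        apply le_of_eq; ring
    _ = ENNReal.ofReal (2 ^ p * K) * ∫⁻ r in Ioo (0:ℝ) 1,
          ENNReal.ofReal ((1 - r) ^ (p - 2) * (1 - b * r) ^ (1 - p)) := by
        rw [lintegral_const_mul _ (by fun_prop)]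
    _ ≤ _ := by
        rw [ENNReal.ofReal_mul (by positivity : 0 ≤ 2 ^ p * K)]
        gcongr
        exact radial_int p hp b hb0 hb1

lemma bloch_le (p : ℝ) (hp : 1 < p) : ∃ c > 0, ∀ g : ℂ → ℂ, MemBesov p g → ∀ b : ℝ, 0 ≤ b → b < 1 →
    (1 - b) * ‖deriv g b‖ ≤ c * besovNorm p g := by
  have hpi := Real.pi_pos
  have hp0 : 0 < p := by linarith
  set c : ℝ := min ((2:ℝ)⁻¹ ^ (p - 2)) (3 ^ (p - 2)) with hc
  have hc0 : 0 < c := lt_min (by positivity) (by positivity)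
  refine ⟨(4 / c) ^ (1 / p), by positivity, fun g hg b hb0 hb1 => ?_⟩
  obtain ⟨hd, hi⟩ := hg
  set δ := 1 - b with hδ
  have hδ0 : 0 < δ := by linarith
  have hball : closedBall (b:ℂ) (δ / 2) ⊆ ball 0 1 := by
    intro z hz
    rw [mem_closedBall, dist_eq_norm] at hz
    rw [mem_ball_zero_iff]
    have := norm_add_le (z - b) (b:ℂ)
    rw [sub_add_cancel, Complex.norm_of_nonneg hb0] at this
    linarith
  have hsm := submean p hp (deriv g) b (δ / 2) (by positivity) (ball 0 1) (hd.deriv isOpen_ball) hball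
  have hw : ∀ z ∈ ball (b:ℂ) (δ / 2), c * δ ^ (p - 2) ≤ (1 - ‖z‖ ^ 2) ^ (p - 2) := by
    intro z hz
    rw [mem_ball, dist_eq_norm] at hz
    have h1 := norm_add_le (z - b) (b:ℂ)
    rw [sub_add_cancel, Complex.norm_of_nonneg hb0] at h1
    have h2 := norm_sub_norm_le (b:ℂ) z
    rw [Complex.norm_of_nonneg hb0, norm_sub_rev] at h2
    have h3 := norm_nonneg z
    have lo : 2⁻¹ * δ ≤ 1 - ‖z‖ ^ 2 := by nlinarith
    have hi : 1 - ‖z‖ ^ 2 ≤ 3 * δ := by nlinarith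
    rcases le_total 2 p with h2p | h2p
    · calc c * δ ^ (p - 2) ≤ (2:ℝ)⁻¹ ^ (p - 2) * δ ^ (p - 2) := by gcongr; exact min_le_left _ _
        _ = (2⁻¹ * δ) ^ (p - 2) := by rw [Real.mul_rpow (by positivity) hδ0.le]
        _ ≤ _ := Real.rpow_le_rpow (by positivity) lo (by linarith)
    · calc c * δ ^ (p - 2) ≤ 3 ^ (p - 2) * δ ^ (p - 2) := by gcongr; exact min_le_right _ _
        _ = (3 * δ) ^ (p - 2) := by rw [Real.mul_rpow (by positivity) hδ0.le]
        _ ≤ _ := Real.rpow_le_rpow_of_nonpos (by nlinarith) hi (by linarith)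
  have hsub : ball (b:ℂ) (δ / 2) ⊆ ball 0 1 := ball_subset_closedBall.trans hball
  set J := ∫ z in ball (0:ℂ) 1, (1 - ‖z‖ ^ 2) ^ (p - 2) * ‖deriv g z‖ ^ p with hJ
  have hnn : ∀ z ∈ ball (0:ℂ) 1, 0 ≤ (1 - ‖z‖ ^ 2) ^ (p - 2) * ‖deriv g z‖ ^ p := by
    intro z hz
    rw [mem_ball_zero_iff] at hz
    have : 0 ≤ 1 - ‖z‖ ^ 2 := by nlinarith [norm_nonneg z]
    positivity
  have hJ0 : 0 ≤ J := setIntegral_nonneg measurableSet_ball hnn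
  have hI : c * δ ^ (p - 2) * ∫ z in ball (b:ℂ) (δ / 2), ‖deriv g z‖ ^ p ≤ J := by
    rw [← integral_const_mul]
    calc _ ≤ ∫ z in ball (b:ℂ) (δ / 2), (1 - ‖z‖ ^ 2) ^ (p - 2) * ‖deriv g z‖ ^ p := by
          apply setIntegral_mono_on _ (hi.mono_set hsub) measurableSet_ball
          · intro z hz
            exact mul_le_mul_of_nonneg_right (hw z hz) (by positivity)
          · have hcn : ContinuousOn (fun z => c * δ ^ (p - 2) * ‖deriv g z‖ ^ p) (closedBall (b:ℂ) (δ / 2)) :=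
              continuousOn_const.mul ((((hd.deriv isOpen_ball).continuousOn.mono hball).norm).rpow_const
                (fun _ _ => Or.inr hp0.le))
            exact (hcn.integrableOn_compact (isCompact_closedBall _ _)).mono_set ball_subset_closedBall
      _ ≤ J := by
          apply setIntegral_mono_set hi _ hsub.eventuallyLE
          exact (ae_restrict_iff' measurableSet_ball).2 (Filter.Eventually.of_forall hnn)
  have key : (δ * ‖deriv g b‖) ^ p ≤ 4 / c * (Real.pi⁻¹ * J) := by
    have h5 : c * δ ^ (p - 2) * (Real.pi * (δ / 2) ^ 2 * ‖deriv g b‖ ^ p) ≤ J :=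
      (mul_le_mul_of_nonneg_left hsm (by positivity)).trans hI
    have h6 : δ ^ p = δ ^ (p - 2) * δ ^ 2 := by
      rw [← Real.rpow_natCast, ← Real.rpow_add hδ0]; norm_num
    rw [Real.mul_rpow hδ0.le (norm_nonneg _), h6]
    rw [show 4 / c * (Real.pi⁻¹ * J) = (4 * J) / (c * Real.pi) by field_simp, le_div_iff₀ (by positivity)]
    linarith
  have h7 := Real.rpow_le_rpow (by positivity) key (by positivity : 0 ≤ 1 / p)
  rw [← Real.rpow_mul (by positivity), mul_one_div_cancel hp0.ne', Real.rpow_one,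
    Real.mul_rpow (by positivity) (by positivity)] at h7
  refine h7.trans ?_
  rw [besovNorm]
  gcongr
  linarith [norm_nonneg (g 0)]

def tf (b : ℝ) : ℂ → ℂ := fun z => -Complex.log (1 - b * z)

lemma bz_lt (b : ℝ) (hb0 : 0 < b) (hb1 : b < 1) (z : ℂ) (hz : z ∈ ball (0:ℂ) 1) : ‖b * z‖ < 1 := by
  rw [mem_ball_zero_iff] at hz
  rw [norm_mul, Complex.norm_of_nonneg hb0.le]
  nlinarith [norm_nonneg z]

lemma tf_deriv (b : ℝ) (hb0 : 0 < b) (hb1 : b < 1) (z : ℂ) (hz : z ∈ ball (0:ℂ) 1) :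
    HasDerivAt (tf b) (b / (1 - b * z)) z := by
  have h1 : (1 - b * z) ∈ Complex.slitPlane := by
    apply Complex.mem_slitPlane_of_norm_lt_one (z := -(b * z)) (by simpa using bz_lt b hb0 hb1 z hz) |> fun h => ?_
    simpa [sub_eq_add_neg] using h
  have h2 : HasDerivAt (fun z : ℂ => 1 - b * z) (-b) z := by
    simpa using ((hasDerivAt_id z).const_mul (b:ℂ)).const_sub 1
  have := (h2.clog h1).neg
  rw [neg_div, neg_neg] at this
  exact this

lemma tf_tc (b : ℝ) (hb0 : 0 < b) (hb1 : b < 1) (k : ℕ) : tc (tf b) k = ((b ^ k / k : ℝ) : ℂ) := by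
  have h1 : HasFPowerSeriesAt (tf b) (FormalMultilinearSeries.ofScalars ℂ fun n : ℕ => (((b ^ n / n : ℝ)) : ℂ)) 0 := by
    rw [hasFPowerSeriesAt_iff]
    filter_upwards [isOpen_ball.mem_nhds (mem_ball_self one_pos : (0:ℂ) ∈ ball 0 1)] with z hz
    have := Complex.hasSum_taylorSeries_neg_log (bz_lt b hb0 hb1 z hz)
    rw [zero_add, tf]
    have he : (fun n : ℕ => z ^ n • (FormalMultilinearSeries.ofScalars ℂ fun n : ℕ => (((b ^ n / n : ℝ)) : ℂ)).coeff n)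
        = fun n : ℕ => (b * z) ^ n / (n : ℂ) := by
      ext n
      rw [FormalMultilinearSeries.coeff_ofScalars, mul_pow, smul_eq_mul]
      push_cast
      ring
    rw [he]
    exact this
  have h2 := h1.analyticAt.hasFPowerSeriesAt
  have := congrArg (fun q => FormalMultilinearSeries.coeff q k) (h2.eq_formalMultilinearSeries h1)
  simpa [FormalMultilinearSeries.coeff_ofScalars, tc] using this

lemma tf_besov (p : ℝ) (hp : 1 < p) : ∃ K > 0, ∀ b : ℝ, 3 / 4 ≤ b → b < 1 →
    MemBesov p (tf b) ∧ besovNorm p (tf b) ≤ K * Real.log (2 / (1 - b)) ^ (1 / p) := by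
  obtain ⟨K, hK, hint⟩ := disc_int p hp
  have hpi := Real.pi_pos
  have hp0 : 0 < p := by linarith
  have hp1 : 0 < p - 1 := by linarith
  refine ⟨(Real.pi⁻¹ * (K * (1 / (p - 1) + 1))) ^ (1 / p), by positivity, fun b hb hb1 => ?_⟩
  have hb0 : 0 < b := by linarith
  have hδ : 0 < 1 - b := by linarith
  set B := K * (1 / (p - 1) + Real.log (1 / (1 - b))) with hB
  have hlog0 : 0 ≤ Real.log (1 / (1 - b)) := Real.log_nonneg (by rw [le_div_iff₀ hδ]; linarith)
  have hB0 : 0 ≤ B := by positivity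
  have hle : ∫⁻ z in ball (0:ℂ) 1, ENNReal.ofReal ((1 - ‖z‖ ^ 2) ^ (p - 2) * ‖deriv (tf b) z‖ ^ p)
      ≤ ENNReal.ofReal B := by
    refine (setLIntegral_mono' measurableSet_ball fun z hz => ?_).trans (hint b hb0 hb1)
    apply ENNReal.ofReal_le_ofReal
    rw [(tf_deriv b hb0 hb1 z hz).deriv]
    have hz' := mem_ball_zero_iff.1 hz
    have : 0 ≤ 1 - ‖z‖ ^ 2 := by nlinarith [norm_nonneg z]
    gcongr
    rw [norm_div, Complex.norm_of_nonneg hb0.le, Real.rpow_neg (norm_nonneg _), ← Real.inv_rpow (norm_nonneg _)]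
    gcongr
    rw [div_eq_mul_inv]
    exact mul_le_of_le_one_left (by positivity) hb1.le
  have hnn : 0 ≤ᵐ[volume.restrict (ball (0:ℂ) 1)]
      fun z => (1 - ‖z‖ ^ 2) ^ (p - 2) * ‖deriv (tf b) z‖ ^ p := by
    refine (ae_restrict_iff' measurableSet_ball).2 (Filter.Eventually.of_forall fun z hz => ?_)
    have hz' := mem_ball_zero_iff.1 hz
    have : 0 ≤ 1 - ‖z‖ ^ 2 := by nlinarith [norm_nonneg z]
    simp only [Pi.zero_apply]
    positivity
  have hmeas : Measurable fun z => (1 - ‖z‖ ^ 2) ^ (p - 2) * ‖deriv (tf b) z‖ ^ p := by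
    have := measurable_deriv (tf b)
    fun_prop
  have hI : IntegrableOn (fun z => (1 - ‖z‖ ^ 2) ^ (p - 2) * ‖deriv (tf b) z‖ ^ p) (ball (0:ℂ) 1) := by
    refine ⟨hmeas.aestronglyMeasurable, ?_⟩
    rw [hasFiniteIntegral_iff_ofReal hnn]
    exact hle.trans_lt ENNReal.ofReal_lt_top
  refine ⟨⟨fun z hz => (tf_deriv b hb0 hb1 z hz).differentiableAt.differentiableWithinAt, hI⟩, ?_⟩
  have hJ : ∫ z in ball (0:ℂ) 1, (1 - ‖z‖ ^ 2) ^ (p - 2) * ‖deriv (tf b) z‖ ^ p ≤ B := by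
    rw [← ofReal_integral_eq_lintegral_ofReal hI hnn] at hle
    exact (ENNReal.ofReal_le_ofReal_iff hB0).1 hle
  have hJ0 : 0 ≤ ∫ z in ball (0:ℂ) 1, (1 - ‖z‖ ^ 2) ^ (p - 2) * ‖deriv (tf b) z‖ ^ p :=
    integral_nonneg_of_ae hnn
  have hL1 : 1 ≤ Real.log (2 / (1 - b)) := by
    rw [Real.le_log_iff_exp_le (by positivity), le_div_iff₀ hδ]
    nlinarith [Real.exp_one_lt_d9, Real.exp_pos 1]
  have hL2 : Real.log (1 / (1 - b)) ≤ Real.log (2 / (1 - b)) := by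
    gcongr; norm_num
  rw [besovNorm, ← Real.mul_rpow (by positivity) (by positivity)]
  have : ‖tf b 0‖ = 0 := by simp [tf]
  rw [this, zero_add, mul_assoc]
  gcongr
  refine hJ.trans ?_
  rw [hB, mul_assoc]
  gcongr
  rw [add_mul, one_mul]
  gcongr
  exact le_mul_of_one_le_right (by positivity) hL1

lemma mom_low (μ : Measure ℝ) [IsFiniteMeasure μ] (b : ℝ) (hb0 : 0 < b) (n : ℕ) :
    b ^ n * (μ (Ico b 1)).toReal ≤ mom μ n := by
  have hint : IntegrableOn (fun t : ℝ => t ^ n) (Ico 0 1) μ :=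
    (((continuous_pow n).continuousOn (s := Icc (0:ℝ) 1)).integrableOn_compact isCompact_Icc).mono_set
      Ico_subset_Icc_self
  have hsub : Ico b 1 ⊆ Ico 0 1 := Ico_subset_Ico_left hb0.le
  calc b ^ n * (μ (Ico b 1)).toReal = ∫ t in Ico b 1, b ^ n ∂μ := by
        rw [setIntegral_const, smul_eq_mul, mul_comm]; rfl
    _ ≤ ∫ t in Ico b 1, t ^ n ∂μ := by
        apply setIntegral_mono_on _ (hint.mono_set hsub) measurableSet_Ico
        · intro t ht
          exact pow_le_pow_left₀ hb0.le ht.1 n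
        · exact integrableOn_const (measure_ne_top _ _)
    _ ≤ _ := by
        apply setIntegral_mono_set hint _ hsub.eventuallyLE
        refine (ae_restrict_iff' measurableSet_Ico).2 (Filter.Eventually.of_forall fun t ht => ?_)
        exact pow_nonneg ht.1 n

lemma coeff_low (μ : Measure ℝ) [IsFiniteMeasure μ] (b : ℝ) (hb0 : 0 < b) (hb1 : b < 1)
    (hs : ∀ n : ℕ, Summable fun k : ℕ => ‖(mom μ (n + k) : ℂ) * tc (tf b) k‖) (n : ℕ) :
    ∃ c : ℝ, hmuCoeff μ (tf b) n = (c : ℂ) ∧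
      b ^ n * ((μ (Ico b 1)).toReal * -Real.log (1 - b ^ 2)) ≤ c := by
  refine ⟨∑' k : ℕ, mom μ (n + k) * (b ^ k / k), ?_, ?_⟩
  · rw [hmuCoeff, Complex.ofReal_tsum]
    congr 1
    ext k
    rw [tf_tc b hb0 hb1, ← Complex.ofReal_mul]
  · have hlog : HasSum (fun k : ℕ => (b ^ 2) ^ k / k) (-Real.log (1 - b ^ 2)) := by
      have := Real.hasSum_pow_div_log_of_abs_lt_one (x := b ^ 2)
        (by rw [abs_of_nonneg (by positivity)]; nlinarith)
      have h2 := (hasSum_nat_add_iff (f := fun k : ℕ => (b ^ 2) ^ k / (k:ℝ))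
        (g := -Real.log (1 - b ^ 2)) 1).1 (by simpa using this)
      simpa using h2
    have h3 := hlog.mul_left (b ^ n * (μ (Ico b 1)).toReal)
    rw [← mul_assoc, ← h3.tsum_eq]
    apply h3.summable.tsum_le_tsum
    · intro k
      have := mom_low μ b hb0 (n + k)
      calc b ^ n * (μ (Ico b 1)).toReal * ((b ^ 2) ^ k / k)
          = (b ^ (n + k) * (μ (Ico b 1)).toReal) * (b ^ k / k) := by ring
        _ ≤ _ := by gcongr
    · have := hs n
      simp_rw [tf_tc b hb0 hb1, ← Complex.ofReal_mul, Complex.norm_real] at this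
      exact this.of_norm

lemma deriv_low (μ : Measure ℝ) [IsFiniteMeasure μ] (b : ℝ) (hb0 : 0 < b) (hb1 : b < 1)
    (hwd : HmuWD μ (tf b)) (hd : DifferentiableOn ℂ (Hmu μ (tf b)) (ball 0 1)) :
    ((μ (Ico b 1)).toReal * -Real.log (1 - b ^ 2)) * (b / (1 - b ^ 2) ^ 2) ≤
      ‖deriv (Hmu μ (tf b)) b‖ := by
  choose c hc hcl using coeff_low μ b hb0 hb1 hwd.1
  set A := (μ (Ico b 1)).toReal * -Real.log (1 - b ^ 2) with hA
  have hmem : ∀ x ∈ Ioo (0:ℝ) 1, (x:ℂ) ∈ ball (0:ℂ) 1 := by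
    intro x hx
    rw [mem_ball_zero_iff, Complex.norm_of_nonneg hx.1.le]
    exact hx.2
  have hsum : ∀ x ∈ Ioo (0:ℝ) 1, Summable fun n => c n * x ^ n := by
    intro x hx
    have := hwd.2 x (hmem x hx)
    simp_rw [hc, ← Complex.ofReal_pow, ← Complex.ofReal_mul, Complex.norm_real] at this
    exact this.of_norm
  have hg : ∀ x ∈ Ioo (0:ℝ) 1, (Hmu μ (tf b) x).re = ∑' n, c n * x ^ n := by
    intro x hx
    simp only [Hmu, hc, ← Complex.ofReal_pow, ← Complex.ofReal_mul]
    rw [← Complex.ofReal_tsum, Complex.ofReal_re]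
  have hgeo : ∀ x ∈ Ioo (0:ℝ) 1, HasSum (fun n : ℕ => A * (b * x) ^ n) (A * (1 - b * x)⁻¹) := by
    intro x hx
    have := mul_pos hb0 hx.1
    exact (hasSum_geometric_of_lt_one this.le (by nlinarith [hx.1, hx.2])).mul_left A
  have hmono : MonotoneOn (fun x : ℝ => (Hmu μ (tf b) x).re - A * (1 - b * x)⁻¹) (Ioo 0 1) := by
    intro x hx y hy hxy
    simp only
    rw [hg x hx, hg y hy, ← (hgeo x hx).tsum_eq, ← (hgeo y hy).tsum_eq,
      ← (hsum x hx).tsum_sub (hgeo x hx).summable, ← (hsum y hy).tsum_sub (hgeo y hy).summable]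
    apply ((hsum x hx).sub (hgeo x hx).summable).tsum_le_tsum _ ((hsum y hy).sub (hgeo y hy).summable)
    intro n
    have h1 : x ^ n ≤ y ^ n := pow_le_pow_left₀ hx.1.le hxy n
    have h2 := hcl n
    rw [mul_pow, mul_pow]
    nlinarith
  have hbI : b ∈ Ioo (0:ℝ) 1 := ⟨hb0, hb1⟩
  have hne : 1 - b * b ≠ 0 := by nlinarith
  have hD1 : HasDerivAt (fun x : ℝ => (Hmu μ (tf b) x).re) (deriv (Hmu μ (tf b)) b).re b :=
    ((hd.differentiableAt (isOpen_ball.mem_nhds (hmem b hbI))).hasDerivAt).real_of_complex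
  have hD2 : HasDerivAt (fun x : ℝ => A * (1 - b * x)⁻¹) (A * (b / (1 - b * b) ^ 2)) b := by
    have h2 : HasDerivAt (fun x : ℝ => 1 - b * x) (-b) b := by
      simpa using ((hasDerivAt_id b).const_mul b).const_sub 1
    have := (h2.inv hne).const_mul A
    rw [neg_neg] at this
    exact this
  have hD : HasDerivAt (fun x : ℝ => (Hmu μ (tf b) x).re - A * (1 - b * x)⁻¹)
      ((deriv (Hmu μ (tf b)) b).re - A * (b / (1 - b * b) ^ 2)) b := hD1.sub hD2
  have hnn : 0 ≤ (deriv (Hmu μ (tf b)) b).re - A * (b / (1 - b * b) ^ 2) := by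
    have h1 := hmono.derivWithin_nonneg (x := b)
    rwa [(hD.hasDerivWithinAt (s := Ioo 0 1)).derivWithin (isOpen_Ioo.uniqueDiffWithinAt hbI)] at h1
  have := Complex.re_le_norm (deriv (Hmu μ (tf b)) b)
  rw [show b ^ 2 = b * b from sq b]
  linarith

/-- Theorem 1.8: if `1 < p < ∞` and `H_μ` is well defined and bounded on `B^p`, then `μ` is
a `(1 - 1/p)`-logarithmic `1`-Carleson measure. -/
theorem hmu_bounded_Bp_logCarleson (p : ℝ) (hp : 1 < p) (μ : Measure ℝ) [IsFiniteMeasure μ]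
    (hsupp : μ (Ico (0:ℝ) 1)ᶜ = 0)
    (hwd : ∀ f : ℂ → ℂ, MemBesov p f → HmuWD μ f ∧ MemBesov p (Hmu μ f))
    (hbdd : ∃ C > 0, ∀ f : ℂ → ℂ, MemBesov p f →
      besovNorm p (Hmu μ f) ≤ C * besovNorm p f) :
    IsLogCarleson μ (1 - 1/p) 1 := by
  obtain ⟨C, hC, hbd⟩ := hbdd
  obtain ⟨c, hc, hbl⟩ := bloch_le p hp
  obtain ⟨K, hK, htf⟩ := tf_besov p hp
  have hp0 : 0 < p := by linarith
  have hα : 0 ≤ 1 - 1 / p := by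
    rw [sub_nonneg, div_le_one hp0]; exact hp.le
  have hl8 : 0 ≤ Real.log 8 := Real.log_nonneg (by norm_num)
  set M := (μ univ).toReal with hM
  have hM0 : 0 ≤ M := ENNReal.toReal_nonneg
  refine ⟨4 * (M * Real.log 8 ^ (1 - 1 / p)) + 16 * (c * (C * K)), by positivity, fun b hb => ?_⟩
  obtain ⟨hb0, hb1⟩ := hb
  have hδ : 0 < 1 - b := by linarith
  rw [Real.rpow_one]
  set m := (μ (Ico b 1)).toReal with hm
  have hm0 : 0 ≤ m := ENNReal.toReal_nonneg
  have hmM : m ≤ M := ENNReal.toReal_mono (measure_ne_top _ _) (measure_mono (subset_univ _))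
  set L := Real.log (2 / (1 - b)) with hL
  have hL0 : 0 < L := Real.log_pos (by rw [lt_div_iff₀ hδ]; linarith)
  rcases lt_or_ge b (3 / 4) with hb34 | hb34
  · have h1 : L ≤ Real.log 8 := by
      apply Real.log_le_log (by positivity)
      rw [div_le_iff₀ hδ]; linarith
    have h2 : m * L ^ (1 - 1 / p) ≤ M * Real.log 8 ^ (1 - 1 / p) := by gcongr
    have h3 : 0 ≤ M * Real.log 8 ^ (1 - 1 / p) := by positivity
    have h4 : 0 ≤ 16 * (c * (C * K)) := by positivity
    nlinarith
  · have hb0' : 0 < b := by linarith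
    obtain ⟨hmem, hnorm⟩ := htf b hb34 hb1
    obtain ⟨hw, hmem2⟩ := hwd _ hmem
    have h1 := deriv_low μ b hb0' hb1 hw hmem2.1
    have h2 := hbl _ hmem2 b hb0 hb1
    have h3 := hbd _ hmem
    have hup : (1 - b) * ‖deriv (Hmu μ (tf b)) b‖ ≤ c * (C * (K * L ^ (1 / p))) :=
      h2.trans (by gcongr; exact h3.trans (by gcongr))
    have hlam : L / 3 ≤ -Real.log (1 - b ^ 2) := by
      have e1 : Real.log (1 - b ^ 2) ≤ Real.log (2 * (1 - b)) :=
        Real.log_le_log (by nlinarith) (by nlinarith)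
      have e2 : Real.log (2 * (1 - b)) = Real.log 2 + Real.log (1 - b) :=
        Real.log_mul (by norm_num) hδ.ne'
      have e3 : L = Real.log 2 - Real.log (1 - b) := Real.log_div (by norm_num) hδ.ne'
      have e4 : Real.log (1 - b) ≤ - (2 * Real.log 2) := by
        rw [show -(2 * Real.log 2) = Real.log (1 / 4) by
          rw [show (1 / 4 : ℝ) = (2 ^ 2)⁻¹ by norm_num, Real.log_inv, Real.log_pow]; norm_num]
        exact Real.log_le_log hδ (by linarith)
      linarith
    have hq : 3 / 16 / (1 - b) ^ 2 ≤ b / (1 - b ^ 2) ^ 2 := by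
      have hpos : 0 < 1 - b ^ 2 := by nlinarith
      have : 1 - b ^ 2 ≤ 2 * (1 - b) := by nlinarith
      have h4 : (1 - b ^ 2) ^ 2 ≤ (2 * (1 - b)) ^ 2 := by gcongr
      rw [div_le_div_iff₀ (by positivity) (by positivity)]
      nlinarith [sq_nonneg (1 - b)]
    have h5 : (m * (L / 3)) * (3 / 16 / (1 - b) ^ 2) ≤ ‖deriv (Hmu μ (tf b)) b‖ :=
      le_trans (by gcongr; exact mul_nonneg hm0 (le_trans (by positivity) hlam)) h1
    have h6 : m * L ≤ 16 * (c * (C * K)) * (1 - b) * L ^ (1 / p) := by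
      have h7 : (1 - b) * ((m * (L / 3)) * (3 / 16 / (1 - b) ^ 2)) ≤ c * (C * (K * L ^ (1 / p))) :=
        (mul_le_mul_of_nonneg_left h5 hδ.le).trans hup
      have h8 : (1 - b) * ((m * (L / 3)) * (3 / 16 / (1 - b) ^ 2)) = m * L / (16 * (1 - b)) := by
        field_simp
      rw [h8, div_le_iff₀ (by positivity)] at h7
      linarith
    have h9 : L = L ^ (1 - 1 / p) * L ^ (1 / p) := by
      rw [← Real.rpow_add hL0]; simp
    have h10 : 0 < L ^ (1 / p) := by positivity
    have h11 : m * L ^ (1 - 1 / p) ≤ 16 * (c * (C * K)) * (1 - b) := by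
      apply le_of_mul_le_mul_right _ h10
      calc m * L ^ (1 - 1 / p) * L ^ (1 / p) = m * L := by rw [mul_assoc, ← h9]
        _ ≤ _ := h6
    have h12 : 0 ≤ 4 * (M * Real.log 8 ^ (1 - 1 / p)) * (1 - b) := by positivity
    linarith

end PaperHankel
end
end
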